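/- There is an absolute constant c such that the total fractional weighted flow-time of algorithm A (summed over all jobs not in J^imm) is at most (c/ε²)·F^O, where F^O is the optimal total fractional weighted flow-time for the instance J. -/

import Mathlib

/-!
The cost of a schedule is counted in two ways around the arrival costs
`B_j = p_j ∑_{i ∈ A(r_j)} min(ρ_i, ρ_j) p_i(r_j)`, so that `α_j = B_j + w_j p_j / 2`.

*Upper bound* (`AlgA.sum_W_le`). For two jobs `i`, `j` the product `p_i(t) p_j(t)` telescopes, so
if the highest-density job were always processed, the cost of the algorithm would be about `∑ α_j`
over the jobs that are not rejected. While a job `j` is run to the detriment of denser ones, these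
have been released since `j` was started and weigh at most `w_j / ε` (`AlgA.overhead`); this adds
at most `∑ w_j p_j / ε`.

*Lower bound* (`AlgA.sum_B_le`). The numbers `B_j`, together with the weight `W(t)` pending in the
algorithm, are dual feasible: `B_j / p_j ≤ ρ_j (t - r_j) + W(t)` for `t ≥ r_j`
(`AlgA.dual_feasible`). Charging this to the slots of any competing schedule gives
`∑_j B_j ≤ F^O + F^A`, where the sum now includes the rejected jobs.

Subtracting, the *rejected* jobs satisfy `∑ B_j = O(1/ε) F^O`, and it remains to bound all arrival
costs by `O(1/ε)` times those of the rejected jobs, up to `O(1/ε²) F^O`. Within a bucket the costs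
agree up to a constant. For `α⁺` the first job of each bucket is rejected, so the rejected jobs pay
for the whole table (`AlgA.sum_JP_le`). For `α⁻` up to `1/ε - 1` jobs per bucket stay unpaid
(`AlgA.sum_JM_le`). If `P_c` bounds the weight of classes below `c` that is ever pending at once,
then `α_j⁻ ≤ p_j P_c` and `p_j ≤ ε P_c / 2^c` for a job `j ∈ J⁻` of class `c`, so summing two
geometric series the unpaid jobs cost `O(∑_c P_c² / 2^c)`. By a Hardy inequality (`hardy`) this is
`O(∑_d M_d² / 2^d)`, with `M_d` the bound for class `d` alone; and weight `M_d` of a single class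
pending at once forces arrival costs `α⁺` of order `M_d² / 2^d` in that class
(`AlgA.class_weight_le`), which the first table has already paid for.
-/

open Finset
open scoped Classical

noncomputable section

namespace NPSched

/-- The density `ρ_j = w_j / p_j` of job `j`. -/
def den (p : ℕ → ℕ) (w : ℕ → ℝ) (j : ℕ) : ℝ := w j / p j

/-- The density class `⌊ρ_j⌋₂` of job `j`: the largest integer `i` with `2 ^ i ≤ ρ_j`. -/
def cls (p : ℕ → ℕ) (w : ℕ → ℝ) (j : ℕ) : ℤ := Int.log 2 (den p w j)

/-- Remaining size `p_j(t)` of job `j` at integer time `t` under schedule `sched`,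
where `sched t` is the job (if any) processed during the slot `[t, t+1]`. -/
def rem (p : ℕ → ℕ) (sched : ℕ → Option ℕ) (j t : ℕ) : ℕ :=
  p j - ((Finset.range t).filter fun t' => sched t' = some j).card

/-- Remaining weight `w_j(t) = ρ_j · p_j(t)`. -/
def wrem (p : ℕ → ℕ) (w : ℕ → ℝ) (sched : ℕ → Option ℕ) (j t : ℕ) : ℝ :=
  den p w j * rem p sched j t

/-- Fractional weighted flow time `∑_{t ≥ r_j} w_j(t)` of job `j`. -/
def fracFlow (r p : ℕ → ℕ) (w : ℕ → ℝ) (sched : ℕ → Option ℕ) (j : ℕ) : ℝ :=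
  ∑' t : ℕ, if r j ≤ t then wrem p w sched j t else 0

/-- `s` is the first time at which job `j` is ever processed. -/
def isStart (sched : ℕ → Option ℕ) (j s : ℕ) : Prop :=
  sched s = some j ∧ ∀ s' < s, sched s' ≠ some j

/-- Active jobs `A(t)`: released by `t`, not immediately rejected, not yet finished. -/
def activeAt (J : Finset ℕ) (r p : ℕ → ℕ) (sched : ℕ → Option ℕ) (Jimm : Finset ℕ)
    (t : ℕ) : Finset ℕ :=
  J.filter fun j => r j ≤ t ∧ j ∉ Jimm ∧ 0 < rem p sched j t

/-- The set `A(r_j)` of active jobs present when `j` arrives: jobs released strictly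
earlier, or simultaneously but earlier in the fixed (index) order, that are neither
rejected nor finished.  (`j` itself is excluded.) -/
def arrSet (J : Finset ℕ) (r p : ℕ → ℕ) (sched : ℕ → Option ℕ) (Jimm : Finset ℕ)
    (j : ℕ) : Finset ℕ :=
  J.filter fun j' =>
    (r j' < r j ∨ (r j' = r j ∧ j' < j)) ∧ j' ∉ Jimm ∧ 0 < rem p sched j' (r j)

/-- `α_j`: the increase of total fractional weighted flow time caused by the arrival
of `j`, had HDF been run on `A(r_j) ∪ {j}` from time `r_j` on. -/
def alpha (J : Finset ℕ) (r p : ℕ → ℕ) (w : ℕ → ℝ) (sched : ℕ → Option ℕ)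
    (Jimm : Finset ℕ) (j : ℕ) : ℝ :=
  w j * ∑ j' ∈ (arrSet J r p sched Jimm j).filter (fun j' => den p w j ≤ den p w j'),
      (rem p sched j' (r j) : ℝ)
    + w j * p j / 2
    + p j * ∑ j' ∈ (arrSet J r p sched Jimm j).filter (fun j' => den p w j' < den p w j),
        wrem p w sched j' (r j)

/-- `α_j⁺`: the part of (the two sums of) `α_j` coming from jobs of density class
at least `⌊ρ_j⌋₂`. -/
def alphaPlus (J : Finset ℕ) (r p : ℕ → ℕ) (w : ℕ → ℝ) (sched : ℕ → Option ℕ)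
    (Jimm : Finset ℕ) (j : ℕ) : ℝ :=
  w j * ∑ j' ∈ (arrSet J r p sched Jimm j).filter
      (fun j' => cls p w j ≤ cls p w j' ∧ den p w j ≤ den p w j'),
      (rem p sched j' (r j) : ℝ)
    + p j * ∑ j' ∈ (arrSet J r p sched Jimm j).filter
        (fun j' => cls p w j ≤ cls p w j' ∧ den p w j' < den p w j),
        wrem p w sched j' (r j)

/-- `α_j⁻`: the contribution to `α_j` of jobs of density class strictly less
than `⌊ρ_j⌋₂`. -/
def alphaMinus (J : Finset ℕ) (r p : ℕ → ℕ) (w : ℕ → ℝ) (sched : ℕ → Option ℕ)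
    (Jimm : Finset ℕ) (j : ℕ) : ℝ :=
  p j * ∑ j' ∈ (arrSet J r p sched Jimm j).filter (fun j' => cls p w j' < cls p w j),
      wrem p w sched j' (r j)

/-- The set `J⁺` of jobs assigned to table `T⁺`. -/
def Jplus (J : Finset ℕ) (r p : ℕ → ℕ) (w : ℕ → ℝ) (sched : ℕ → Option ℕ)
    (Jimm : Finset ℕ) (ε : ℝ) : Finset ℕ :=
  J.filter fun j => w j * p j / ε ≤ alphaPlus J r p w sched Jimm j

/-- The set `J⁻` of jobs assigned to table `T⁻`. -/
def Jminus (J : Finset ℕ) (r p : ℕ → ℕ) (w : ℕ → ℝ) (sched : ℕ → Option ℕ)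
    (Jimm : Finset ℕ) (ε : ℝ) : Finset ℕ :=
  J.filter fun j => w j * p j / ε < alphaMinus J r p w sched Jimm j

/-- The bucket `(⌊α_j⁺/w_j⌋₂, ⌊w_j⌋₂)` of table `T⁺` to which a job of `J⁺` is assigned. -/
def bucketPlus (J : Finset ℕ) (r p : ℕ → ℕ) (w : ℕ → ℝ) (sched : ℕ → Option ℕ)
    (Jimm : Finset ℕ) (j : ℕ) : ℤ × ℤ :=
  (Int.log 2 (alphaPlus J r p w sched Jimm j / w j), Int.log 2 (w j))

/-- The bucket `(⌊α_j⁻⌋₂, ⌊ρ_j⌋₂, ⌊p_j⌋₂)` of table `T⁻` to which a job of `J⁻` is assigned. -/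
def bucketMinus (J : Finset ℕ) (r p : ℕ → ℕ) (w : ℕ → ℝ) (sched : ℕ → Option ℕ)
    (Jimm : Finset ℕ) (j : ℕ) : ℤ × ℤ × ℤ :=
  (Int.log 2 (alphaMinus J r p w sched Jimm j), cls p w j, Int.log 2 ((p j : ℝ)))

/-- `j'` arrives no later than `j` (simultaneous arrivals ordered by index). -/
def arrLE (r : ℕ → ℕ) (j' j : ℕ) : Prop :=
  r j' < r j ∨ (r j' = r j ∧ j' ≤ j)

/-- The (1-based) position of `j` in the arrival order of its bucket of `T⁺`. -/
def rankPlus (J : Finset ℕ) (r p : ℕ → ℕ) (w : ℕ → ℝ) (sched : ℕ → Option ℕ)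
    (Jimm : Finset ℕ) (ε : ℝ) (j : ℕ) : ℕ :=
  ((Jplus J r p w sched Jimm ε).filter fun j' =>
    bucketPlus J r p w sched Jimm j' = bucketPlus J r p w sched Jimm j ∧ arrLE r j' j).card

/-- The (1-based) position of `j` in the arrival order of its bucket of `T⁻`. -/
def rankMinus (J : Finset ℕ) (r p : ℕ → ℕ) (w : ℕ → ℝ) (sched : ℕ → Option ℕ)
    (Jimm : Finset ℕ) (ε : ℝ) (j : ℕ) : ℕ :=
  ((Jminus J r p w sched Jimm ε).filter fun j' =>
    bucketMinus J r p w sched Jimm j' = bucketMinus J r p w sched Jimm j ∧ arrLE r j' j).card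

/-- An execution of algorithm `A` on a job instance `(J, r, p, w)` with parameter
`ε` (where `k = 1/ε` is a positive integer): the data consists of the schedule
(`sched t` is the job processed in slot `[t, t+1]`), the set `Jimm` of immediately
rejected jobs, and the growing set `L t` of preemptible jobs; the fields below
axiomatise exactly the rules of algorithm `A`. -/
structure AlgA where
  /-- the (finite) set of jobs -/
  J : Finset ℕ
  /-- release times -/
  r : ℕ → ℕ
  /-- sizes -/
  p : ℕ → ℕ
  /-- weights -/
  w : ℕ → ℝ
  /-- the parameter ε -/
  ε : ℝ
  /-- `k = 1/ε`, a positive integer -/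
  k : ℕ
  /-- the schedule produced by algorithm `A` -/
  sched : ℕ → Option ℕ
  /-- the set `J^imm` of immediately rejected jobs -/
  Jimm : Finset ℕ
  /-- `L t` : the set of preemptible jobs at time `t` -/
  L : ℕ → Finset ℕ
  hp : ∀ j ∈ J, 0 < p j
  hw : ∀ j ∈ J, 0 < w j
  hε : 0 < ε
  hε2 : ε ^ 2 ≤ 1 / 2
  hk : (k : ℝ) = 1 / ε
  /-- immediate rejections: in each bucket of `T⁺` the first job and every
  `(1/ε)`-th job thereafter (positions `1, 1 + k, 1 + 2k, …`), and in each bucket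
  of `T⁻` every `(1/ε)`-th job (positions `k, 2k, …`), are rejected on arrival. -/
  hJimm : ∀ j, j ∈ Jimm ↔ j ∈ J ∧
    ((j ∈ Jplus J r p w sched Jimm ε ∧ rankPlus J r p w sched Jimm ε j % k = 1 % k) ∨
     (j ∈ Jminus J r p w sched Jimm ε ∧ rankMinus J r p w sched Jimm ε j % k = 0))
  hL0 : L 0 = ∅
  /-- a job enters `L` when the weight released since it started processing
  exceeds `w_j / ε`; once in `L` it stays in `L`. -/
  hLsucc : ∀ t j, j ∈ L (t + 1) ↔ j ∈ L t ∨
    (sched t = some j ∧ ∃ s, isStart sched j s ∧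
      w j / ε < ∑ j' ∈ J.filter (fun j' => s < r j' ∧ r j' ≤ t + 1), w j')
  /-- only active jobs are processed -/
  hvalid : ∀ t j, sched t = some j → j ∈ activeAt J r p sched Jimm t
  /-- a running job that is unfinished and not preemptible keeps running -/
  hcont : ∀ t j, sched t = some j → 0 < rem p sched j (t + 1) → j ∉ L (t + 1) →
    sched (t + 1) = some j
  /-- initially, a highest-density active job is processed (if any job is active) -/
  hHDF0 : (activeAt J r p sched Jimm 0 = ∅ ∧ sched 0 = none) ∨
    ∃ j, sched 0 = some j ∧ ∀ j' ∈ activeAt J r p sched Jimm 0, den p w j' ≤ den p w j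
  /-- whenever the previous job has finished or become preemptible (or no job was
  running), a highest-density active job is processed (if any job is active) -/
  hHDFsucc : ∀ t, (∀ j, sched t = some j → rem p sched j (t + 1) = 0 ∨ j ∈ L (t + 1)) →
    (activeAt J r p sched Jimm (t + 1) = ∅ ∧ sched (t + 1) = none) ∨
    ∃ j, sched (t + 1) = some j ∧
      ∀ j' ∈ activeAt J r p sched Jimm (t + 1), den p w j' ≤ den p w j
  /-- every job that is not immediately rejected is eventually finished by `A` -/
  hdone : ∀ j ∈ J, j ∉ Jimm → ∃ T, rem p sched j T = 0



/-- A valid (preemptive) offline schedule for the instance `(J, r, p)`: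
it only processes released, unfinished jobs of `J`, and completes every job of `J`. -/
def OffValid (J : Finset ℕ) (r p : ℕ → ℕ) (osched : ℕ → Option ℕ) : Prop :=
  (∀ t j, osched t = some j → j ∈ J ∧ r j ≤ t ∧ 0 < rem p osched j t) ∧
  ∀ j ∈ J, ∃ T, rem p osched j T = 0

/-! ### Counting and summation tools -/

lemma le_mul_card_one (k : ℕ) (hk : 2 ≤ k) (n : ℕ) :
    n ≤ k * #{x ∈ Finset.Icc 1 n | x % k = 1 % k} := by
  have hsub : (range ((n + k - 1) / k)).image (fun i => 1 + k * i) ⊆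
      {x ∈ Finset.Icc 1 n | x % k = 1 % k} := by
    intro x hx
    obtain ⟨i, hi, rfl⟩ := Finset.mem_image.1 hx
    have hi := Finset.mem_range.1 hi
    have h1 : (i + 1) * k ≤ n + k - 1 :=
      (Nat.mul_le_mul_right k hi).trans (Nat.div_mul_le_self _ _)
    have h2 : i * k + k = (i + 1) * k := by ring
    have h3 : k * i = i * k := mul_comm _ _
    refine Finset.mem_filter.2 ⟨Finset.mem_Icc.2 ⟨by omega, by omega⟩, ?_⟩
    simp
  have hcard := Finset.card_le_card hsub
  rw [Finset.card_image_of_injective, Finset.card_range] at hcard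
  · have h1 := Nat.div_add_mod (n + k - 1) k
    have h2 := Nat.mod_lt (n + k - 1) (show 0 < k by omega)
    have h3 := Nat.mul_le_mul_left k hcard
    omega
  · intro a b hab
    have : k * a = k * b := by simpa using hab
    exact Nat.eq_of_mul_eq_mul_left (by omega) this

lemma le_mul_card_zero (k : ℕ) (hk : 2 ≤ k) (n : ℕ) :
    n ≤ k * #{x ∈ Finset.Icc 1 n | x % k = 0} + k := by
  have hsub : (range (n / k)).image (fun i => k * (i + 1)) ⊆
      {x ∈ Finset.Icc 1 n | x % k = 0} := by
    intro x hx
    obtain ⟨i, hi, rfl⟩ := Finset.mem_image.1 hx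
    have hi := Finset.mem_range.1 hi
    have h1 : (i + 1) * k ≤ n := (Nat.mul_le_mul_right k hi).trans (Nat.div_mul_le_self _ _)
    have h2 : i * k + k = (i + 1) * k := by ring
    have h3 : k * (i + 1) = (i + 1) * k := mul_comm _ _
    refine Finset.mem_filter.2 ⟨Finset.mem_Icc.2 ⟨by omega, by omega⟩, ?_⟩
    simp
  have hcard := Finset.card_le_card hsub
  rw [Finset.card_image_of_injective, Finset.card_range] at hcard
  · have h1 := Nat.div_add_mod n k
    have h2 := Nat.mod_lt n (show 0 < k by omega)
    have h3 := Nat.mul_le_mul_left k hcard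
    omega
  · intro a b hab
    have := Nat.eq_of_mul_eq_mul_left (show 0 < k by omega) hab
    omega

lemma two_zpow_log_le {x : ℝ} (hx : 0 < x) : (2 : ℝ) ^ Int.log 2 x ≤ x := by
  have := Int.zpow_log_le_self (b := 2) (by norm_num) hx
  rwa [Nat.cast_ofNat] at this

/-- Arrival ranks within a finite set `N` enumerate `1, …, #N`. -/
lemma card_rank (r : ℕ → ℕ) (N : Finset ℕ) (P : ℕ → Prop) [DecidablePred P] :
    #{j ∈ N | P #{j' ∈ N | arrLE r j' j}} = #{x ∈ Finset.Icc 1 #N | P x} := by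
  set f : ℕ → ℕ := fun j => #{j' ∈ N | arrLE r j' j} with hf
  have hlt : ∀ i ∈ N, ∀ j ∈ N, ¬ arrLE r j i → f i < f j := by
    intro i _ j hj hji
    refine Finset.card_lt_card ((Finset.ssubset_iff_of_subset ?_).2 ⟨j, ?_, ?_⟩)
    · intro l hl
      obtain ⟨h1, h2⟩ := Finset.mem_filter.1 hl
      refine Finset.mem_filter.2 ⟨h1, ?_⟩
      unfold arrLE at *
      omega
    · exact Finset.mem_filter.2 ⟨hj, Or.inr ⟨rfl, le_rfl⟩⟩
    · exact fun h => hji (Finset.mem_filter.1 h).2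
  have hinj : Set.InjOn f N := by
    intro i hi j hj hij
    by_contra hne
    by_cases h : arrLE r j i
    · have h' : ¬ arrLE r i j := by unfold arrLE at *; omega
      have := hlt j hj i hi h'
      omega
    · have := hlt i hi j hj h
      omega
  have himg : N.image f = Finset.Icc 1 #N := by
    refine Finset.eq_of_subset_of_card_le ?_ ?_
    · intro y hy
      obtain ⟨j, hj, rfl⟩ := Finset.mem_image.1 hy
      refine Finset.mem_Icc.2 ⟨Finset.card_pos.2 ⟨j, ?_⟩, Finset.card_filter_le _ _⟩
      exact Finset.mem_filter.2 ⟨hj, Or.inr ⟨rfl, le_rfl⟩⟩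
    · rw [Finset.card_image_of_injOn hinj]; simp
  rw [← himg, Finset.filter_image, Finset.card_image_of_injOn]
  exact hinj.mono fun x hx => (Finset.mem_filter.1 (Finset.mem_coe.1 hx)).1

/-- If in each bucket the values agree up to a factor `D`, and all but `e` of the elements are paid
for at rate `k` by the elements of `R`, then the sum over `N` is paid for by the sum over `R` and
`e` elements per bucket. -/
lemma bucket_sum {κ : Type*} [DecidableEq κ] (N R : Finset ℕ) (g : ℕ → κ) (v : ℕ → ℝ) (lo : κ → ℝ)
    (D k e : ℝ) (hD : 0 ≤ D) (hk : 0 ≤ k) (hR : R ⊆ N) (hlo0 : ∀ β, 0 ≤ lo β)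
    (hlo : ∀ j ∈ N, lo (g j) ≤ v j) (hhi : ∀ j ∈ N, v j ≤ D * lo (g j))
    (hc : ∀ β, (#{j ∈ N | g j = β} : ℝ) ≤ k * #{j ∈ R | g j = β} + e) :
    ∑ j ∈ N, v j ≤ D * k * ∑ j ∈ R, v j + D * e * ∑ β ∈ N.image g, lo β := by
  rw [← Finset.sum_fiberwise_of_maps_to (s := N) (t := N.image g)
      (fun j hj => Finset.mem_image_of_mem g hj),
    ← Finset.sum_fiberwise_of_maps_to (s := R) (t := N.image g)
      (fun j hj => Finset.mem_image_of_mem g (hR hj)), Finset.mul_sum, Finset.mul_sum,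
    ← Finset.sum_add_distrib]
  refine Finset.sum_le_sum fun β _ => ?_
  have h1 : ∑ j ∈ N with g j = β, v j ≤ #{j ∈ N | g j = β} * (D * lo β) := by
    rw [← nsmul_eq_mul]
    refine Finset.sum_le_card_nsmul _ _ _ fun j hj => ?_
    obtain ⟨h, rfl⟩ := Finset.mem_filter.1 hj
    exact hhi j h
  have h2 : #{j ∈ R | g j = β} * lo β ≤ ∑ j ∈ R with g j = β, v j := by
    rw [← nsmul_eq_mul]
    refine Finset.card_nsmul_le_sum _ _ _ fun j hj => ?_
    obtain ⟨h, rfl⟩ := Finset.mem_filter.1 hj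
    exact hlo j (hR h)
  calc _ ≤ _ := h1
    _ ≤ (k * #{j ∈ R | g j = β} + e) * (D * lo β) :=
        mul_le_mul_of_nonneg_right (hc β) (mul_nonneg hD (hlo0 β))
    _ = D * k * (#{j ∈ R | g j = β} * lo β) + D * e * lo β := by ring
    _ ≤ _ := by gcongr

lemma geom_sum_le (Z : Finset ℤ) : ∀ n : ℤ, (∀ a ∈ Z, a ≤ n) →
    ∑ a ∈ Z, (2 : ℝ) ^ a ≤ 2 * 2 ^ n := by
  induction Z using Finset.induction_on_max with
  | empty => intro n _; simp; positivity
  | insert a s hs ih =>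
    intro n hn
    rw [Finset.sum_insert (fun h => (hs a h).false)]
    have h1 := ih (a - 1) fun b hb => by have := hs b hb; omega
    have h2 : (2 : ℝ) ^ a ≤ 2 ^ n := zpow_le_zpow_right₀ (by norm_num) (hn a (by simp))
    rw [zpow_sub_one₀ (by norm_num)] at h1
    linarith

/-- A sum of distinct powers of two is at most twice any bound on its terms. -/
lemma geom_sum_le' (Z : Finset ℤ) (X : ℝ) (hX : 0 ≤ X) (h : ∀ a ∈ Z, (2 : ℝ) ^ a ≤ X) :
    ∑ a ∈ Z, (2 : ℝ) ^ a ≤ 2 * X := by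
  rcases Z.eq_empty_or_nonempty with rfl | hne
  · simpa using hX
  · have h1 := geom_sum_le Z (Z.max' hne) fun a ha => Finset.le_max' Z a ha
    have h2 := h _ (Z.max'_mem hne)
    linarith

/-- The Hardy-type inequality, with a term `2 (∑ M_d)² / 2^n` added on the left that makes the
induction on the largest element go through. -/
lemma hardy_aux (M : ℤ → ℝ) (C : Finset ℤ) : ∀ n : ℤ, (∀ a ∈ C, a ≤ n) →
    ∑ c ∈ C, (∑ d ∈ C with d < c, M d) ^ 2 / (2 : ℝ) ^ c + 2 * (∑ d ∈ C, M d) ^ 2 / 2 ^ n ≤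
      6 * ∑ d ∈ C, M d ^ 2 / 2 ^ d := by
  induction C using Finset.induction_on_max with
  | empty => intro n _; simp
  | insert a s hs ih =>
    intro n hn
    have ha : a ∉ s := fun h => (hs a h).false
    have h1 := ih (a - 1) fun b hb => by have := hs b hb; omega
    rw [zpow_sub_one₀ (by norm_num)] at h1
    rw [Finset.sum_insert ha, Finset.sum_insert ha, Finset.sum_insert ha]
    have e1 : {d ∈ insert a s | d < a} = s := by
      ext d
      simp only [Finset.mem_filter, Finset.mem_insert]
      exact ⟨fun h => h.1.resolve_left h.2.ne, fun h => ⟨Or.inr h, hs d h⟩⟩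
    have e2 : ∀ c ∈ s, (∑ d ∈ insert a s with d < c, M d) = ∑ d ∈ s with d < c, M d := by
      intro c hc
      rw [Finset.filter_insert, if_neg (hs c hc).not_gt]
    have e3 : ∑ c ∈ s, (∑ d ∈ insert a s with d < c, M d) ^ 2 / (2 : ℝ) ^ c =
        ∑ c ∈ s, (∑ d ∈ s with d < c, M d) ^ 2 / 2 ^ c :=
      Finset.sum_congr rfl fun c hc => by rw [e2 c hc]
    rw [e1, e3]
    set T := ∑ d ∈ s, M d
    have hpos : (0 : ℝ) < 2 ^ a := by positivity
    have h2 : (2 : ℝ) ^ a ≤ 2 ^ n := zpow_le_zpow_right₀ (by norm_num) (hn a (by simp))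
    have h3 : 2 * (M a + T) ^ 2 / (2 : ℝ) ^ n ≤ 2 * (M a + T) ^ 2 / 2 ^ a := by gcongr
    have h4 : T ^ 2 / (2 : ℝ) ^ a + 2 * (M a + T) ^ 2 / 2 ^ a ≤
        2 * T ^ 2 / (2 ^ a * 2⁻¹) + 6 * (M a ^ 2 / 2 ^ a) := by
      have : 2 * T ^ 2 / ((2 : ℝ) ^ a * 2⁻¹) + 6 * (M a ^ 2 / 2 ^ a) -
          (T ^ 2 / (2 : ℝ) ^ a + 2 * (M a + T) ^ 2 / 2 ^ a) = (2 * M a - T) ^ 2 / 2 ^ a := by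
        field_simp; ring
      have h5 : 0 ≤ (2 * M a - T) ^ 2 / (2 : ℝ) ^ a := by positivity
      linarith
    rw [mul_add]
    linarith

/-- A Hardy-type inequality with geometric weights. -/
lemma hardy (M : ℤ → ℝ) (C : Finset ℤ) :
    ∑ c ∈ C, (∑ d ∈ C with d < c, M d) ^ 2 / (2 : ℝ) ^ c ≤ 6 * ∑ d ∈ C, M d ^ 2 / 2 ^ d := by
  obtain ⟨n, hn⟩ := C.bddAbove
  refine le_trans ?_ (hardy_aux M C n fun a ha => hn ha)
  have : 0 ≤ 2 * (∑ d ∈ C, M d) ^ 2 / (2 : ℝ) ^ n := by positivity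
  linarith

/-! ### Remaining sizes under an arbitrary schedule -/

/-- A schedule that only processes released, unfinished jobs. -/
def Good (r p : ℕ → ℕ) (s : ℕ → Option ℕ) : Prop :=
  ∀ t j, s t = some j → r j ≤ t ∧ 0 < rem p s j t

/-- Remaining size of `j` at time `t`, counted as `0` before the release of `j`. -/
def pend (r p : ℕ → ℕ) (s : ℕ → Option ℕ) (j t : ℕ) : ℝ :=
  if r j ≤ t then (rem p s j t : ℝ) else 0

/-- Indicator that slot `[t, t+1]` is given to job `j`. -/
def ind (s : ℕ → Option ℕ) (j t : ℕ) : ℝ := if s t = some j then 1 else 0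

lemma rem_succ (p : ℕ → ℕ) (s : ℕ → Option ℕ) (j t : ℕ) :
    rem p s j (t + 1) = rem p s j t - if s t = some j then 1 else 0 := by
  unfold rem
  rw [Finset.range_add_one, Finset.filter_insert]
  split_ifs with h
  · rw [Finset.card_insert_of_notMem (by simp)]
    omega
  · simp

lemma rem_anti (p : ℕ → ℕ) (s : ℕ → Option ℕ) (j : ℕ) {t u : ℕ} (h : t ≤ u) :
    rem p s j u ≤ rem p s j t := by
  have : Antitone (rem p s j) := antitone_nat_of_succ_le fun n => by rw [rem_succ]; omega
  exact this h

lemma rem_le (p : ℕ → ℕ) (s : ℕ → Option ℕ) (j t : ℕ) : rem p s j t ≤ p j := Nat.sub_le _ _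

section
variable {r p : ℕ → ℕ} {s : ℕ → Option ℕ}

lemma Good.rem_release (h : Good r p s) {j t : ℕ} (ht : t ≤ r j) : rem p s j t = p j := by
  have : ((Finset.range t).filter fun t' => s t' = some j) = ∅ := by
    rw [Finset.filter_eq_empty_iff]
    intro u hu hs
    have := (h u j hs).1
    have := Finset.mem_range.1 hu
    omega
  unfold rem
  rw [this]; simp

lemma Good.pend_release (h : Good r p s) (j : ℕ) : pend r p s j (r j) = p j := by
  simp [pend, h.rem_release le_rfl]

lemma pend_nonneg (r p : ℕ → ℕ) (s : ℕ → Option ℕ) (j t : ℕ) : 0 ≤ pend r p s j t := by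
  unfold pend; split_ifs <;> positivity

lemma pend_le (r p : ℕ → ℕ) (s : ℕ → Option ℕ) (j t : ℕ) : pend r p s j t ≤ p j := by
  unfold pend; split_ifs
  · exact_mod_cast rem_le p s j t
  · positivity

lemma pend_eq_zero {j t : ℕ} (ht : t < r j) : pend r p s j t = 0 := by
  simp [pend, not_le.2 ht]

lemma ind_nonneg (s : ℕ → Option ℕ) (j t : ℕ) : 0 ≤ ind s j t := by
  unfold ind; split_ifs <;> norm_num

lemma Good.ind_eq_zero (h : Good r p s) {j t : ℕ} (ht : t < r j) : ind s j t = 0 := by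
  unfold ind
  rw [if_neg]
  intro hs
  have := (h t j hs).1
  omega

lemma ind_mul_self (s : ℕ → Option ℕ) (j t : ℕ) : ind s j t * ind s j t = ind s j t := by
  unfold ind; split_ifs <;> norm_num

lemma ind_mul_ind (s : ℕ → Option ℕ) {i j : ℕ} (hij : i ≠ j) (t : ℕ) :
    ind s i t * ind s j t = 0 := by
  unfold ind
  split_ifs with h1 h2
  · exact absurd (Option.some.inj (h1.symm.trans h2)) hij
  all_goals norm_num

lemma Good.pend_succ (h : Good r p s) {j t : ℕ} (ht : r j ≤ t) :
    pend r p s j (t + 1) = pend r p s j t - ind s j t := by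
  unfold pend ind
  rw [if_pos ht, if_pos (ht.trans t.le_succ), rem_succ]
  split_ifs with hs
  · have := (h t j hs).2
    rw [Nat.cast_sub (by omega)]; simp
  · simp

lemma pend_anti {j t u : ℕ} (ht : r j ≤ t) (h : t ≤ u) :
    pend r p s j u ≤ pend r p s j t := by
  unfold pend
  rw [if_pos ht, if_pos (ht.trans h)]
  exact_mod_cast rem_anti p s j h

/-- Telescoping of `x_i(t) · x_j(t)`: the time for which each of two jobs waits for the other,
weighted by remaining size. -/
lemma Good.sum_pair (h : Good r p s) {i j : ℕ} (hij : i ≠ j) (hr : r i ≤ r j) (n : ℕ) :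
    ∑ t ∈ range (r j + n), (ind s j t * pend r p s i t + ind s i t * pend r p s j t) =
      p j * pend r p s i (r j) - pend r p s i (r j + n) * pend r p s j (r j + n) := by
  induction n with
  | zero =>
    rw [add_zero, h.pend_release, Finset.sum_eq_zero]
    · ring
    · intro t ht
      have ht := Finset.mem_range.1 ht
      rw [h.ind_eq_zero ht, pend_eq_zero ht]; ring
  | succ n ih =>
    rw [← add_assoc, Finset.sum_range_succ, ih, h.pend_succ (by omega : r i ≤ r j + n),
      h.pend_succ (by omega : r j ≤ r j + n)]
    linear_combination ind_mul_ind s hij (r j + n)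

lemma Good.sum_self (h : Good r p s) (j n : ℕ) :
    ∑ t ∈ range (r j + n), ind s j t * pend r p s j t =
      (p j * (p j + 1) - pend r p s j (r j + n) * (pend r p s j (r j + n) + 1)) / 2 := by
  induction n with
  | zero =>
    rw [add_zero, h.pend_release, Finset.sum_eq_zero]
    · ring
    · intro t ht
      rw [h.ind_eq_zero (Finset.mem_range.1 ht)]; ring
  | succ n ih =>
    rw [← add_assoc, Finset.sum_range_succ, ih, h.pend_succ (by omega : r j ≤ r j + n)]
    linear_combination (1 / 2 : ℝ) * ind_mul_self s j (r j + n)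

lemma Good.sum_ind (h : Good r p s) (j n : ℕ) :
    ∑ t ∈ range (r j + n), ind s j t = p j - pend r p s j (r j + n) := by
  induction n with
  | zero =>
    rw [add_zero, h.pend_release, Finset.sum_eq_zero]
    · ring
    · intro t ht
      rw [h.ind_eq_zero (Finset.mem_range.1 ht)]
  | succ n ih =>
    rw [← add_assoc, Finset.sum_range_succ, ih, h.pend_succ (by omega : r j ≤ r j + n)]
    ring

/-- Every processed unit of `j` contributes its own completion delay to the flow time. -/
lemma Good.sum_flow (h : Good r p s) (j n : ℕ) :
    ∑ t ∈ range (r j + n), pend r p s j t =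
      ∑ t ∈ range (r j + n), ind s j t * (t + 1 - r j) + n * pend r p s j (r j + n) := by
  induction n with
  | zero =>
    rw [add_zero, Finset.sum_eq_zero, Finset.sum_eq_zero]
    · simp
    · intro t ht
      rw [h.ind_eq_zero (Finset.mem_range.1 ht)]; ring
    · intro t ht
      rw [pend_eq_zero (Finset.mem_range.1 ht)]
  | succ n ih =>
    rw [← add_assoc, Finset.sum_range_succ, ih, h.pend_succ (by omega : r j ≤ r j + n),
      Finset.sum_range_succ]
    push_cast
    ring

lemma Good.ind_le_one (_h : Good r p s) (j t : ℕ) : ind s j t ≤ 1 := by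
  unfold ind; split_ifs <;> norm_num

/-- The flow time as a finite sum, up to any time at which the job is finished. -/
lemma fracFlow_eq (w : ℕ → ℝ) {j T : ℕ} (hT : rem p s j T = 0) :
    fracFlow r p w s j = ∑ t ∈ range T, den p w j * pend r p s j t := by
  unfold fracFlow
  rw [tsum_eq_sum (s := range T)]
  · refine Finset.sum_congr rfl fun t _ => ?_
    unfold pend wrem
    split_ifs <;> simp
  · intro t ht
    have hle : T ≤ t := by simpa using ht
    have := rem_anti p s j hle
    have h0 : rem p s j t = 0 := by omega
    simp [wrem, h0]

end

/-- Strict arrival order, ties broken by index. -/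
def arrLT (r : ℕ → ℕ) (i j : ℕ) : Prop := r i < r j ∨ (r i = r j ∧ i < j)

/-- A double sum split into its diagonal and the unordered pairs, ordered by arrival. -/
lemma sum_offdiag (r : ℕ → ℕ) (N : Finset ℕ) (f : ℕ → ℕ → ℝ) :
    ∑ j ∈ N, ∑ i ∈ N, f i j =
      ∑ j ∈ N, f j j + ∑ j ∈ N, ∑ i ∈ N with arrLT r i j, (f i j + f j i) := by
  have key : ∀ i j, f i j = (if i = j then f i j else 0) + (if arrLT r i j then f i j else 0)
      + (if arrLT r j i then f i j else 0) := by
    intro i j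
    unfold arrLT
    rcases lt_trichotomy (r i) (r j) with h | h | h
    · have : i ≠ j := by rintro rfl; omega
      simp [h, this, h.not_gt, h.ne']
    · rcases lt_trichotomy i j with h' | h' | h'
      · simp [h, h'.ne, h'.not_gt, h']
      · subst h'; simp
      · simp [h, h'.ne', h'.not_gt, h']
    · have : i ≠ j := by rintro rfl; omega
      simp [h, this, h.not_gt, h.ne']
  calc ∑ j ∈ N, ∑ i ∈ N, f i j
      = ∑ j ∈ N, ∑ i ∈ N, ((if i = j then f i j else 0) + (if arrLT r i j then f i j else 0)
        + (if arrLT r j i then f i j else 0)) :=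
        Finset.sum_congr rfl fun j _ => Finset.sum_congr rfl fun i _ => key i j
    _ = _ := by
        simp only [Finset.sum_add_distrib]
        rw [add_assoc]
        congr 1
        · refine Finset.sum_congr rfl fun j hj => ?_
          rw [Finset.sum_ite_eq' N j (fun i => f i j), if_pos hj]
        · congr 1
          · refine Finset.sum_congr rfl fun j hj => ?_
            rw [Finset.sum_filter]
          · rw [Finset.sum_comm]
            refine Finset.sum_congr rfl fun j hj => ?_
            rw [Finset.sum_filter]

/-! ### The non-preemption overhead of the algorithm -/

namespace AlgA

variable (A : AlgA)

/-- The jobs that are not immediately rejected. -/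
def J' : Finset ℕ := A.J \ A.Jimm

/-- Density of a job. -/
def d (j : ℕ) : ℝ := den A.p A.w j

/-- Density class of a job. -/
def c (j : ℕ) : ℤ := cls A.p A.w j

/-- Remaining size of a job in the algorithm's schedule, `0` before its release. -/
def x (j t : ℕ) : ℝ := pend A.r A.p A.sched j t

/-- The smaller of two densities. -/
def m (i j : ℕ) : ℝ := min (A.d i) (A.d j)

/-- Total remaining weight of the algorithm at time `t`. -/
def W (t : ℕ) : ℝ := ∑ i ∈ A.J', A.d i * A.x i t

/-- The jobs of `A(r_j)`, finished ones included. -/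
def pre (j : ℕ) : Finset ℕ := {i ∈ A.J' | arrLT A.r i j}

/-- `B_j = α_j - w_j p_j / 2 = p_j ∑_{i ∈ A(r_j)} min(ρ_i, ρ_j) p_i(r_j)`. -/
def B (j : ℕ) : ℝ := A.p j * ∑ i ∈ A.pre j, A.m i j * A.x i (A.r j)

lemma good : Good A.r A.p A.sched := by
  intro t j h
  have := A.hvalid t j h
  simp only [activeAt, Finset.mem_filter] at this
  exact ⟨this.2.1, this.2.2.2⟩

lemma sched_mem {t j : ℕ} (h : A.sched t = some j) : j ∈ A.J' := by
  have := A.hvalid t j h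
  simp only [activeAt, Finset.mem_filter] at this
  simp [J', this.1, this.2.2.1]

lemma J'_sub : A.J' ⊆ A.J := Finset.sdiff_subset

lemma d_pos {j : ℕ} (hj : j ∈ A.J) : 0 < A.d j :=
  div_pos (A.hw j hj) (by exact_mod_cast A.hp j hj)

lemma d_mul_p {j : ℕ} (hj : j ∈ A.J) : A.d j * A.p j = A.w j := by
  have : (A.p j : ℝ) ≠ 0 := by exact_mod_cast (A.hp j hj).ne'
  unfold d den; field_simp

lemma w_div (j : ℕ) : A.w j / A.ε = A.k * A.w j := by
  rw [A.hk]; ring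

lemma k_ge : 2 ≤ A.k := by
  have h1 : A.ε < 1 := by nlinarith [A.hε, A.hε2]
  have h2 : (1 : ℝ) < A.k := by rw [A.hk]; exact (one_lt_div A.hε).2 h1
  exact_mod_cast h2

lemma x_nonneg (j t : ℕ) : 0 ≤ A.x j t := pend_nonneg _ _ _ _ _

lemma L_mono {t u j : ℕ} (h : t ≤ u) (hj : j ∈ A.L t) : j ∈ A.L u := by
  induction u, h using Nat.le_induction with
  | base => exact hj
  | succ n _ ih => exact (A.hLsucc n j).2 (Or.inl ih)

/-- A job that is started is of highest density among the active ones. -/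
lemma start_max {i s : ℕ} (h : isStart A.sched i s) :
    ∀ j ∈ activeAt A.J A.r A.p A.sched A.Jimm s, A.d j ≤ A.d i := by
  obtain ⟨hs, hfirst⟩ := h
  rcases s with _ | u
  · rcases A.hHDF0 with h | ⟨j, hj, hmax⟩
    · rw [h.2] at hs; cases hs
    · obtain rfl := Option.some.inj (hs.symm.trans hj)
      exact hmax
  · by_cases hprem : ∀ j, A.sched u = some j → rem A.p A.sched j (u + 1) = 0 ∨ j ∈ A.L (u + 1)
    · rcases A.hHDFsucc u hprem with h | ⟨j, hj, hmax⟩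
      · rw [h.2] at hs; cases hs
      · obtain rfl := Option.some.inj (hs.symm.trans hj)
        exact hmax
    · push Not at hprem
      obtain ⟨j, hj, h1, h2⟩ := hprem
      have := A.hcont u j hj (Nat.pos_of_ne_zero h1) h2
      obtain rfl := Option.some.inj (hs.symm.trans this)
      exact absurd hj (hfirst u u.lt_succ_self)

/-- While `i` is processed, the active jobs of higher density have total weight at most
`w_i / ε`. -/
lemma overhead {i t : ℕ} (h : A.sched t = some i) :
    ∑ j ∈ activeAt A.J A.r A.p A.sched A.Jimm t with A.d i < A.d j, A.w j ≤ A.k * A.w i := by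
  have hnonneg : 0 ≤ A.k * A.w i :=
    mul_nonneg (Nat.cast_nonneg _) (A.hw i (A.J'_sub (A.sched_mem h))).le
  have hempty : (∀ j ∈ activeAt A.J A.r A.p A.sched A.Jimm t, A.d j ≤ A.d i) →
      ∑ j ∈ activeAt A.J A.r A.p A.sched A.Jimm t with A.d i < A.d j, A.w j ≤ A.k * A.w i := by
    intro hmax
    rw [Finset.filter_eq_empty_iff.2 fun {j} hj => not_lt.2 (hmax j hj)]
    simpa using hnonneg
  obtain ⟨s, hst, hs⟩ : ∃ s ≤ t, isStart A.sched i s := by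
    have hex : ∃ s, A.sched s = some i := ⟨t, h⟩
    exact ⟨Nat.find hex, Nat.find_min' hex h, Nat.find_spec hex, fun s' hs' => Nat.find_min hex hs'⟩
  rcases hst.eq_or_lt with rfl | hlt
  · exact hempty (A.start_max hs)
  obtain ⟨u, rfl⟩ : ∃ u, t = u + 1 := ⟨t - 1, by omega⟩
  by_cases hprem : ∀ j, A.sched u = some j → rem A.p A.sched j (u + 1) = 0 ∨ j ∈ A.L (u + 1)
  · rcases A.hHDFsucc u hprem with h' | ⟨j, hj, hmax⟩
    · rw [h'.2] at h; cases h
    · obtain rfl := Option.some.inj (h.symm.trans hj)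
      exact hempty hmax
  push Not at hprem
  obtain ⟨j, hj, h1, h2⟩ := hprem
  obtain rfl := Option.some.inj (h.symm.trans (A.hcont u j hj (Nat.pos_of_ne_zero h1) h2))
  -- `i` entered no `L`, so little weight was released since its start
  have hw : ¬ A.w i / A.ε < ∑ j' ∈ A.J.filter (fun j' => s < A.r j' ∧ A.r j' ≤ u + 1), A.w j' :=
    fun hw => h2 ((A.hLsucc u i).2 (Or.inr ⟨hj, s, hs, hw⟩))
  rw [not_lt, A.w_div] at hw
  refine le_trans (Finset.sum_le_sum_of_subset_of_nonneg ?_ ?_) hw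
  · intro j hj
    simp only [activeAt, Finset.mem_filter] at hj ⊢
    refine ⟨hj.1.1, ?_, hj.1.2.1⟩
    by_contra hle
    refine absurd (A.start_max hs j ?_) (not_le.2 hj.2)
    simp only [activeAt, Finset.mem_filter]
    exact ⟨hj.1.1, not_lt.1 hle, hj.1.2.2.1,
      lt_of_lt_of_le hj.1.2.2.2 (rem_anti _ _ _ hst)⟩
  · intro j hj _
    exact (A.hw j (Finset.mem_filter.1 hj).1).le

/-- When the processor idles, nothing is pending. -/
lemma idle {t : ℕ} (h : A.sched t = none) : activeAt A.J A.r A.p A.sched A.Jimm t = ∅ := by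
  rcases t with _ | u
  · rcases A.hHDF0 with h' | ⟨j, hj, -⟩
    · exact h'.1
    · rw [hj] at h; cases h
  · by_cases hprem : ∀ j, A.sched u = some j → rem A.p A.sched j (u + 1) = 0 ∨ j ∈ A.L (u + 1)
    · rcases A.hHDFsucc u hprem with h' | ⟨j, hj, -⟩
      · exact h'.1
      · rw [hj] at h; cases h
    · push Not at hprem
      obtain ⟨j, hj, h1, h2⟩ := hprem
      rw [A.hcont u j hj (Nat.pos_of_ne_zero h1) h2] at h; cases h

lemma active_of_x {j t : ℕ} (hj : j ∈ A.J') (h : A.x j t ≠ 0) :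
    j ∈ activeAt A.J A.r A.p A.sched A.Jimm t := by
  unfold x pend at h
  split_ifs at h with hr
  · have h0 : rem A.p A.sched j t ≠ 0 := by exact_mod_cast h
    have hj' := Finset.mem_sdiff.1 hj
    simp only [activeAt, Finset.mem_filter]
    exact ⟨hj'.1, hr, hj'.2, Nat.pos_of_ne_zero h0⟩
  · exact absurd rfl h

/-- The weight present in one slot: the part accounted for by the job being processed, plus the
overhead due to denser jobs waiting. -/
lemma W_le (t : ℕ) : A.W t ≤ ∑ j ∈ A.J', ind A.sched j t *
    (∑ i ∈ A.J', A.m i j * A.x i t + A.k * A.w j) := by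
  rcases hs : A.sched t with _ | j
  · have hx : ∀ i ∈ A.J', A.x i t = 0 := by
      intro i hi
      by_contra h
      have := A.active_of_x hi h
      rw [A.idle hs] at this
      simp at this
    have h1 : A.W t = 0 := Finset.sum_eq_zero fun i hi => by rw [hx i hi, mul_zero]
    rw [h1, Finset.sum_eq_zero]
    intro i _
    simp [ind, hs]
  · have hj := A.sched_mem hs
    rw [Finset.sum_eq_single_of_mem j hj]
    · have : ind A.sched j t = 1 := by simp [ind, hs]
      rw [this, one_mul]
      refine le_trans ?_ (add_le_add_right (A.overhead hs) _)
      have key : ∑ i ∈ A.J', (A.d i - A.m i j) * A.x i t ≤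
          ∑ i ∈ activeAt A.J A.r A.p A.sched A.Jimm t with A.d j < A.d i, A.w i := by
        rw [← Finset.sum_filter_of_ne (p := fun i =>
          i ∈ activeAt A.J A.r A.p A.sched A.Jimm t ∧ A.d j < A.d i)]
        · refine le_trans (Finset.sum_le_sum (g := A.w) ?_)
            (Finset.sum_le_sum_of_subset_of_nonneg ?_ ?_)
          · intro i hi
            have hi' := A.J'_sub (Finset.mem_filter.1 hi).1
            rw [← A.d_mul_p hi']
            have h0 : 0 ≤ A.m i j := le_min (A.d_pos hi').le (A.d_pos (A.J'_sub hj)).le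
            have h1 : A.x i t ≤ A.p i := pend_le _ _ _ _ _
            have h2 := A.x_nonneg i t
            have h3 := A.d_pos hi'
            nlinarith
          · intro i hi
            simpa using (Finset.mem_filter.1 hi).2
          · intro i hi _
            have := (Finset.mem_filter.1 hi).1
            simp only [activeAt, Finset.mem_filter] at this
            exact (A.hw i this.1).le
        · intro i hi hne
          refine ⟨A.active_of_x hi (right_ne_zero_of_mul hne), ?_⟩
          by_contra hle
          apply left_ne_zero_of_mul hne
          unfold m
          rw [min_eq_left (not_lt.1 hle), sub_self]
      have : A.W t = ∑ i ∈ A.J', A.m i j * A.x i t + ∑ i ∈ A.J', (A.d i - A.m i j) * A.x i t := by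
        rw [← Finset.sum_add_distrib]
        exact Finset.sum_congr rfl fun i _ => by ring
      rw [this]
      exact add_le_add_right key _
    · intro i _ hne
      have : ind A.sched i t = 0 := by
        unfold ind
        rw [if_neg]
        rw [hs]
        exact fun h => hne (Option.some.inj h).symm
      rw [this, zero_mul]

lemma m_comm (i j : ℕ) : A.m i j = A.m j i := min_comm _ _

lemma m_nonneg {i j : ℕ} (hi : i ∈ A.J) (hj : j ∈ A.J) : 0 ≤ A.m i j :=
  le_min (A.d_pos hi).le (A.d_pos hj).le

lemma m_self (i : ℕ) : A.m i i = A.d i := min_self _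

/-- A time at which every release and every completion of the algorithm is over. -/
lemma exists_horizon : ∃ T, ∀ t ≥ T, (∀ j ∈ A.J, A.r j ≤ t) ∧
    ∀ j ∈ A.J', rem A.p A.sched j t = 0 := by
  choose! f hf using fun j (hj : j ∈ A.J') =>
    A.hdone j (Finset.mem_sdiff.1 hj).1 (Finset.mem_sdiff.1 hj).2
  refine ⟨A.J.sup A.r + A.J'.sup f, fun t ht => ⟨fun j hj => ?_, fun j hj => ?_⟩⟩
  · have := Finset.le_sup (f := A.r) hj
    omega
  · have h1 := Finset.le_sup (f := f) hj
    have := rem_anti A.p A.sched j (show f j ≤ t by omega)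
    rw [hf j hj] at this
    omega

/-- Upper bound by arrival costs: the total weight over time is at most `∑ α_j` plus the
overhead. -/
lemma sum_W_le {T : ℕ} (hr : ∀ j ∈ A.J, A.r j ≤ T) :
    ∑ t ∈ range T, A.W t ≤ ∑ j ∈ A.J', A.B j + (1 + A.k) * ∑ j ∈ A.J', A.w j * A.p j := by
  have hT : ∀ j ∈ A.J, A.r j + (T - A.r j) = T := fun j hj => by have := hr j hj; omega
  have step1 : ∑ t ∈ range T, A.W t ≤
      ∑ j ∈ A.J', ∑ i ∈ A.J', A.m i j * ∑ t ∈ range T, ind A.sched j t * A.x i t +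
      ∑ j ∈ A.J', A.k * A.w j * ∑ t ∈ range T, ind A.sched j t := by
    refine (Finset.sum_le_sum fun t _ => A.W_le t).trans_eq ?_
    rw [Finset.sum_comm, ← Finset.sum_add_distrib]
    refine Finset.sum_congr rfl fun j _ => ?_
    simp only [mul_add, Finset.sum_add_distrib, Finset.mul_sum]
    congr 1
    · rw [Finset.sum_comm]
      exact Finset.sum_congr rfl fun i _ => Finset.sum_congr rfl fun t _ => by ring
    · exact Finset.sum_congr rfl fun t _ => by ring
  have step2 : ∑ j ∈ A.J', A.k * A.w j * ∑ t ∈ range T, ind A.sched j t ≤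
      A.k * ∑ j ∈ A.J', A.w j * A.p j := by
    rw [Finset.mul_sum]
    refine Finset.sum_le_sum fun j hj => ?_
    have h1 := A.good.sum_ind j (T - A.r j)
    rw [hT j (A.J'_sub hj)] at h1
    rw [h1, ← mul_assoc]
    have := pend_nonneg A.r A.p A.sched j T
    have hw := (A.hw j (A.J'_sub hj)).le
    gcongr
    linarith
  rw [sum_offdiag A.r] at step1
  have step3 : ∑ j ∈ A.J', A.m j j * ∑ t ∈ range T, ind A.sched j t * A.x j t ≤
      ∑ j ∈ A.J', A.w j * A.p j := by
    refine Finset.sum_le_sum fun j hj => ?_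
    have h1 := A.good.sum_self j (T - A.r j)
    rw [hT j (A.J'_sub hj)] at h1
    unfold x
    rw [h1, m_self, ← A.d_mul_p (A.J'_sub hj), mul_assoc]
    have h2 := pend_nonneg A.r A.p A.sched j T
    have h3 : (1 : ℝ) ≤ A.p j := by exact_mod_cast A.hp j (A.J'_sub hj)
    refine mul_le_mul_of_nonneg_left ?_ (A.d_pos (A.J'_sub hj)).le
    nlinarith
  have step4 : ∑ j ∈ A.J', ∑ i ∈ A.J' with arrLT A.r i j,
      (A.m i j * ∑ t ∈ range T, ind A.sched j t * A.x i t +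
        A.m j i * ∑ t ∈ range T, ind A.sched i t * A.x j t) ≤ ∑ j ∈ A.J', A.B j := by
    refine Finset.sum_le_sum fun j hj => ?_
    unfold B pre
    rw [Finset.mul_sum]
    refine Finset.sum_le_sum fun i hi => ?_
    obtain ⟨hi, hij⟩ := Finset.mem_filter.1 hi
    have hne : i ≠ j := by rintro rfl; unfold arrLT at hij; omega
    have hle : A.r i ≤ A.r j := by unfold arrLT at hij; omega
    have h1 := A.good.sum_pair hne hle (T - A.r j)
    rw [hT j (A.J'_sub hj)] at h1
    rw [A.m_comm j i, ← mul_add, ← Finset.sum_add_distrib]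
    unfold x
    rw [h1]
    have h2 := mul_nonneg (pend_nonneg A.r A.p A.sched i T) (pend_nonneg A.r A.p A.sched j T)
    have h3 := A.m_nonneg (A.J'_sub hi) (A.J'_sub hj)
    nlinarith [mul_nonneg h3 h2]
  linarith

/-! ### The lower bound on the optimum -/

/-- The dual constraint: each slot between `r_j` and `t` lowers `∑ min(ρ_i, ρ_j) p_i` by at most
`ρ_j`, and what is left of that sum at time `t` is at most the total pending weight. The job `j`
may itself be a rejected one. -/
lemma dual_feasible {j t : ℕ} (hj : j ∈ A.J) (ht : A.r j ≤ t) :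
    ∑ i ∈ A.pre j, A.m i j * A.x i (A.r j) ≤ A.d j * (t - A.r j) + A.W t := by
  have hpre : ∀ i ∈ A.pre j, i ∈ A.J' ∧ A.r i ≤ A.r j := by
    intro i hi
    obtain ⟨h1, h2⟩ := Finset.mem_filter.1 hi
    exact ⟨h1, by unfold arrLT at h2; omega⟩
  have mono : ∑ i ∈ A.pre j, A.m i j * A.x i (A.r j) ≤
      A.d j * (t - A.r j) + ∑ i ∈ A.pre j, A.m i j * A.x i t := by
    induction t, ht using Nat.le_induction with
    | base => simp
    | succ t ht ih =>
      refine ih.trans ?_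
      have h1 : ∑ i ∈ A.pre j, A.m i j * A.x i (t + 1) =
          ∑ i ∈ A.pre j, A.m i j * A.x i t - ∑ i ∈ A.pre j, A.m i j * ind A.sched i t := by
        rw [← Finset.sum_sub_distrib]
        refine Finset.sum_congr rfl fun i hi => ?_
        unfold x
        rw [A.good.pend_succ ((hpre i hi).2.trans ht)]
        ring
      have h2 : ∑ i ∈ A.pre j, A.m i j * ind A.sched i t ≤ A.d j := by
        rcases hs : A.sched t with _ | l
        · rw [Finset.sum_eq_zero fun i _ => by simp [ind, hs]]
          exact (A.d_pos hj).le
        · have h3 : ∀ i, ind A.sched i t = if l = i then 1 else 0 := by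
            intro i; simp [ind, hs]
          simp only [h3, mul_ite, mul_one, mul_zero, Finset.sum_ite_eq]
          split_ifs
          · exact min_le_right _ _
          · exact (A.d_pos hj).le
      rw [h1]
      push_cast
      linarith
  refine mono.trans (add_le_add_right ?_ _)
  refine le_trans (Finset.sum_le_sum (g := fun i => A.d i * A.x i t) fun i _ =>
    mul_le_mul_of_nonneg_right (min_le_left _ _) (A.x_nonneg i t)) ?_
  exact Finset.sum_le_sum_of_subset_of_nonneg (Finset.filter_subset _ _) fun i hi _ =>
    mul_nonneg (A.d_pos (A.J'_sub hi)).le (A.x_nonneg i t)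

/-- Weak duality: `∑ B_j` over all jobs is at most the cost of any schedule plus the cost of the
algorithm. -/
lemma sum_B_le {o : ℕ → Option ℕ} (ho : Good A.r A.p o) {T : ℕ}
    (hr : ∀ j ∈ A.J, A.r j ≤ T) (hdone : ∀ j ∈ A.J, rem A.p o j T = 0) :
    ∑ j ∈ A.J, A.B j ≤
      ∑ j ∈ A.J, ∑ t ∈ range T, A.d j * pend A.r A.p o j t + ∑ t ∈ range T, A.W t := by
  have hT : ∀ j ∈ A.J, A.r j + (T - A.r j) = T := fun j hj => by have := hr j hj; omega
  have h0 : ∀ j ∈ A.J, pend A.r A.p o j T = 0 := fun j hj => by simp [pend, hdone j hj]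
  have hW : ∀ t, 0 ≤ A.W t := fun t => Finset.sum_nonneg fun i hi =>
    mul_nonneg (A.d_pos (A.J'_sub hi)).le (A.x_nonneg i t)
  have h1 : ∀ j ∈ A.J, A.B j ≤ ∑ t ∈ range T, A.d j * pend A.r A.p o j t +
      ∑ t ∈ range T, ind o j t * A.W t := by
    intro j hj
    have hind := ho.sum_ind j (T - A.r j)
    have hflow := ho.sum_flow j (T - A.r j)
    rw [hT j hj, h0 j hj] at hind hflow
    rw [sub_zero] at hind
    rw [← Finset.mul_sum, hflow, mul_zero, add_zero, Finset.mul_sum, ← Finset.sum_add_distrib]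
    unfold B
    rw [← hind, Finset.sum_mul]
    refine Finset.sum_le_sum fun t _ => ?_
    by_cases ht : A.r j ≤ t
    · have := mul_le_mul_of_nonneg_left (A.dual_feasible hj ht) (ind_nonneg o j t)
      nlinarith [mul_nonneg (ind_nonneg o j t) (A.d_pos hj).le]
    · rw [ho.ind_eq_zero (not_le.1 ht)]; simp
  refine (Finset.sum_le_sum h1).trans ?_
  rw [Finset.sum_add_distrib]
  refine add_le_add_right ?_ _
  rw [Finset.sum_comm]
  refine Finset.sum_le_sum fun t _ => ?_
  rw [← Finset.sum_mul]
  refine mul_le_of_le_one_left (hW t) ?_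
  rcases hs : o t with _ | l
  · rw [Finset.sum_eq_zero fun i _ => by simp [ind, hs]]; norm_num
  · have h3 : ∀ i, ind o i t = if l = i then 1 else 0 := by
      intro i; simp [ind, hs]
    simp only [h3, Finset.sum_ite_eq]
    split_ifs <;> norm_num

/-- The processing costs are at most twice the cost of any schedule, since a job processed in
isolation already costs `w_j (p_j + 1) / 2`. -/
lemma sum_wp_le {o : ℕ → Option ℕ} (ho : Good A.r A.p o) {T : ℕ}
    (hr : ∀ j ∈ A.J, A.r j ≤ T) (hdone : ∀ j ∈ A.J, rem A.p o j T = 0) :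
    ∑ j ∈ A.J, A.w j * A.p j ≤
      2 * ∑ j ∈ A.J, ∑ t ∈ range T, A.d j * pend A.r A.p o j t := by
  rw [Finset.mul_sum]
  refine Finset.sum_le_sum fun j hj => ?_
  have hself := ho.sum_self j (T - A.r j)
  rw [show A.r j + (T - A.r j) = T by have := hr j hj; omega] at hself
  have h0 : pend A.r A.p o j T = 0 := by simp [pend, hdone j hj]
  have hle : ∑ t ∈ range T, ind o j t * pend A.r A.p o j t ≤
      ∑ t ∈ range T, pend A.r A.p o j t :=
    Finset.sum_le_sum fun t _ =>
      mul_le_of_le_one_left (pend_nonneg _ _ _ _ _) (ho.ind_le_one j t)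
  rw [hself, h0] at hle
  rw [← Finset.mul_sum, ← A.d_mul_p hj]
  have hd := A.d_pos hj
  have hp : (0 : ℝ) ≤ A.p j := Nat.cast_nonneg _
  nlinarith [mul_nonneg hd.le hp]

/-! ### The two tables -/

/-- The part `α_j⁺` of the arrival cost. -/
def aP (j : ℕ) : ℝ := alphaPlus A.J A.r A.p A.w A.sched A.Jimm j

/-- The part `α_j⁻` of the arrival cost. -/
def aM (j : ℕ) : ℝ := alphaMinus A.J A.r A.p A.w A.sched A.Jimm j

lemma two_c_le {j : ℕ} (hj : j ∈ A.J) : (2 : ℝ) ^ A.c j ≤ A.d j := two_zpow_log_le (A.d_pos hj)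

lemma lt_two_c {j : ℕ} : A.d j < 2 * (2 : ℝ) ^ A.c j := by
  have := Int.lt_zpow_succ_log_self (b := 2) (by norm_num) (A.d j)
  rw [Nat.cast_ofNat, zpow_add_one₀ (by norm_num)] at this
  rw [mul_comm]
  exact this

lemma c_mono {i j : ℕ} (hi : i ∈ A.J) (h : A.d i ≤ A.d j) : A.c i ≤ A.c j :=
  Int.log_mono_right (A.d_pos hi) h

lemma mem_pre {i j : ℕ} : i ∈ A.pre j ↔
    (i ∈ A.J ∧ i ∉ A.Jimm) ∧ (A.r i < A.r j ∨ (A.r i = A.r j ∧ i < j)) := by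
  unfold pre
  rw [Finset.mem_filter, J', Finset.mem_sdiff]
  rfl

/-- Finished jobs contribute nothing, so `arrSet` may be replaced by `pre`. -/
lemma sum_arrSet (j : ℕ) (P : ℕ → Prop) [DecidablePred P] (f : ℕ → ℝ) :
    ∑ i ∈ arrSet A.J A.r A.p A.sched A.Jimm j with P i, f i * rem A.p A.sched i (A.r j) =
      ∑ i ∈ A.pre j with P i, f i * A.x i (A.r j) := by
  have hx : ∀ i ∈ A.pre j, A.x i (A.r j) = rem A.p A.sched i (A.r j) := by
    intro i hi
    have := (Finset.mem_filter.1 hi).2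
    unfold x pend
    rw [if_pos (by unfold arrLT at this; omega)]
  rw [Finset.sum_congr rfl (g := fun i => f i * (rem A.p A.sched i (A.r j) : ℝ))
    (s₁ := (A.pre j).filter P) fun i hi => by rw [hx i (Finset.mem_filter.1 hi).1]]
  refine Finset.sum_subset ?_ ?_
  · intro i hi
    simp only [arrSet, Finset.mem_filter, mem_pre] at hi ⊢
    tauto
  · intro i hi hni
    have : rem A.p A.sched i (A.r j) = 0 := by
      by_contra h
      apply hni
      simp only [arrSet, Finset.mem_filter, mem_pre] at hi ⊢
      exact ⟨⟨hi.1.1.1, hi.1.2, hi.1.1.2, Nat.pos_of_ne_zero h⟩, hi.2⟩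
    rw [this]; simp

lemma aP_eq {j : ℕ} (hj : j ∈ A.J) :
    A.aP j = A.p j * ∑ i ∈ A.pre j with A.c j ≤ A.c i, A.m i j * A.x i (A.r j) := by
  have h1 : A.w j * ∑ i ∈ arrSet A.J A.r A.p A.sched A.Jimm j with
      A.c j ≤ A.c i ∧ A.d j ≤ A.d i, (rem A.p A.sched i (A.r j) : ℝ) =
      A.p j * ∑ i ∈ A.pre j with A.c j ≤ A.c i ∧ A.d j ≤ A.d i, A.m i j * A.x i (A.r j) := by
    have := A.sum_arrSet j (fun i => A.c j ≤ A.c i ∧ A.d j ≤ A.d i) (fun _ => 1)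
    simp only [one_mul] at this
    rw [this, ← A.d_mul_p hj, Finset.mul_sum, Finset.mul_sum]
    refine Finset.sum_congr rfl fun i hi => ?_
    unfold m
    rw [min_eq_right (Finset.mem_filter.1 hi).2.2]
    ring
  have h2 : A.p j * ∑ i ∈ arrSet A.J A.r A.p A.sched A.Jimm j with
      A.c j ≤ A.c i ∧ A.d i < A.d j, wrem A.p A.w A.sched i (A.r j) =
      A.p j * ∑ i ∈ A.pre j with A.c j ≤ A.c i ∧ ¬ A.d j ≤ A.d i, A.m i j * A.x i (A.r j) := by
    have := A.sum_arrSet j (fun i => A.c j ≤ A.c i ∧ A.d i < A.d j) A.d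
    unfold wrem
    change (A.p j : ℝ) * ∑ i ∈ arrSet A.J A.r A.p A.sched A.Jimm j with
      A.c j ≤ A.c i ∧ A.d i < A.d j, A.d i * rem A.p A.sched i (A.r j) = _
    rw [this]
    simp only [not_le]
    congr 1
    refine Finset.sum_congr rfl fun i hi => ?_
    unfold m
    rw [min_eq_left (Finset.mem_filter.1 hi).2.2.le]
  refine (congrArg₂ (· + ·) h1 h2).trans ?_
  simp only [← mul_add, ← Finset.filter_filter]
  rw [Finset.sum_filter_add_sum_filter_not]

lemma aM_eq {j : ℕ} (hj : j ∈ A.J) :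
    A.aM j = A.p j * ∑ i ∈ A.pre j with ¬ A.c j ≤ A.c i, A.m i j * A.x i (A.r j) := by
  have := A.sum_arrSet j (fun i => A.c i < A.c j) A.d
  change (A.p j : ℝ) * ∑ i ∈ arrSet A.J A.r A.p A.sched A.Jimm j with
    A.c i < A.c j, A.d i * rem A.p A.sched i (A.r j) = _
  rw [this]
  simp only [not_le]
  congr 1
  refine Finset.sum_congr rfl fun i hi => ?_
  have h := (Finset.mem_filter.1 hi).2
  have hle : A.d i ≤ A.d j := by
    by_contra hlt
    exact absurd (A.c_mono hj (not_le.1 hlt).le) (not_le.2 h)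
  unfold m
  rw [min_eq_left hle]

lemma pre_sub {i j : ℕ} (hi : i ∈ A.pre j) : i ∈ A.J' := (Finset.mem_filter.1 hi).1

lemma B_eq {j : ℕ} (hj : j ∈ A.J) : A.B j = A.aP j + A.aM j := by
  rw [A.aP_eq hj, A.aM_eq hj, ← mul_add, Finset.sum_filter_add_sum_filter_not]
  rfl

lemma term_nonneg {i j : ℕ} (hj : j ∈ A.J) (hi : i ∈ A.pre j) (t : ℕ) :
    0 ≤ A.m i j * A.x i t :=
  mul_nonneg (A.m_nonneg (A.J'_sub (A.pre_sub hi)) hj) (A.x_nonneg i t)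

lemma aP_nonneg {j : ℕ} (hj : j ∈ A.J) : 0 ≤ A.aP j := by
  rw [A.aP_eq hj]
  exact mul_nonneg (Nat.cast_nonneg _) (Finset.sum_nonneg fun i hi =>
    A.term_nonneg hj (Finset.mem_filter.1 hi).1 _)

lemma aM_nonneg {j : ℕ} (hj : j ∈ A.J) : 0 ≤ A.aM j := by
  rw [A.aM_eq hj]
  exact mul_nonneg (Nat.cast_nonneg _) (Finset.sum_nonneg fun i hi =>
    A.term_nonneg hj (Finset.mem_filter.1 hi).1 _)

/-- The jobs of table `T⁺`. -/
def JP : Finset ℕ := Jplus A.J A.r A.p A.w A.sched A.Jimm A.ε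

/-- The jobs of table `T⁻`. -/
def JM : Finset ℕ := Jminus A.J A.r A.p A.w A.sched A.Jimm A.ε

/-- The bucket of a job in table `T⁺`. -/
def bP (j : ℕ) : ℤ × ℤ := bucketPlus A.J A.r A.p A.w A.sched A.Jimm j

/-- The bucket of a job in table `T⁻`. -/
def bM (j : ℕ) : ℤ × ℤ × ℤ := bucketMinus A.J A.r A.p A.w A.sched A.Jimm j

lemma mem_JP {j : ℕ} : j ∈ A.JP ↔ j ∈ A.J ∧ A.k * (A.w j * A.p j) ≤ A.aP j := by
  have : A.w j * A.p j / A.ε = A.k * (A.w j * A.p j) := by rw [A.hk]; ring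
  rw [← this]
  exact Finset.mem_filter

lemma mem_JM {j : ℕ} : j ∈ A.JM ↔ j ∈ A.J ∧ A.k * (A.w j * A.p j) < A.aM j := by
  have : A.w j * A.p j / A.ε = A.k * (A.w j * A.p j) := by rw [A.hk]; ring
  rw [← this]
  exact Finset.mem_filter

lemma wp_pos {j : ℕ} (hj : j ∈ A.J) : 0 < A.w j * A.p j :=
  mul_pos (A.hw j hj) (by exact_mod_cast A.hp j hj)

lemma k_pos : (0 : ℝ) < A.k := by
  have := A.k_ge
  exact_mod_cast (by omega : 0 < A.k)

lemma Jimm_sub : A.Jimm ⊆ A.J := fun j hj => ((A.hJimm j).1 hj).1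

lemma sum_le_sum_B_Jimm {R : Finset ℕ} (hR : R ⊆ A.Jimm) {f : ℕ → ℝ}
    (hf : ∀ j ∈ A.J, 0 ≤ f j ∧ f j ≤ A.B j) : ∑ j ∈ R, f j ≤ ∑ j ∈ A.Jimm, A.B j :=
  (Finset.sum_le_sum fun j hj => (hf j (A.Jimm_sub (hR hj))).2).trans
    (Finset.sum_le_sum_of_subset_of_nonneg hR fun j hj _ =>
      (hf j (A.Jimm_sub hj)).1.trans (hf j (A.Jimm_sub hj)).2)

/-- In table `T⁺` every bucket is paid for entirely by its rejected jobs. -/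
lemma sum_JP_le : ∑ j ∈ A.JP, A.aP j ≤ 4 * A.k * ∑ j ∈ A.Jimm, A.B j := by
  set rk : ℕ → ℕ := fun j => rankPlus A.J A.r A.p A.w A.sched A.Jimm A.ε j with hrk
  set R : Finset ℕ := {j ∈ A.JP | rk j % A.k = 1 % A.k} with hR
  have hRimm : R ⊆ A.Jimm := by
    intro j hj
    obtain ⟨h1, h2⟩ := Finset.mem_filter.1 hj
    exact (A.hJimm j).2 ⟨(A.mem_JP.1 h1).1, Or.inl ⟨h1, h2⟩⟩
  have hv : ∀ j ∈ A.JP, (2 : ℝ) ^ (A.bP j).1 * 2 ^ (A.bP j).2 ≤ A.aP j ∧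
      A.aP j ≤ 4 * ((2 : ℝ) ^ (A.bP j).1 * 2 ^ (A.bP j).2) := by
    intro j hj
    obtain ⟨hJ, h1⟩ := A.mem_JP.1 hj
    have hw := A.hw j hJ
    have ha : 0 < A.aP j := lt_of_lt_of_le (mul_pos A.k_pos (A.wp_pos hJ)) h1
    have l1 : (2 : ℝ) ^ (A.bP j).1 ≤ A.aP j / A.w j := two_zpow_log_le (div_pos ha hw)
    have l2 : (2 : ℝ) ^ (A.bP j).2 ≤ A.w j := two_zpow_log_le hw
    have u1 : A.aP j / A.w j < (2 : ℝ) ^ (A.bP j).1 * 2 := by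
      have := Int.lt_zpow_succ_log_self (b := 2) (by norm_num) (A.aP j / A.w j)
      rwa [Nat.cast_ofNat, zpow_add_one₀ (by norm_num)] at this
    have u2 : A.w j < (2 : ℝ) ^ (A.bP j).2 * 2 := by
      have := Int.lt_zpow_succ_log_self (b := 2) (by norm_num) (A.w j)
      rwa [Nat.cast_ofNat, zpow_add_one₀ (by norm_num)] at this
    have e : A.aP j = A.aP j / A.w j * A.w j := by field_simp
    constructor
    · rw [e]; gcongr
    · calc A.aP j = A.aP j / A.w j * A.w j := e
        _ ≤ ((2 : ℝ) ^ (A.bP j).1 * 2) * ((2 : ℝ) ^ (A.bP j).2 * 2) := by gcongr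
        _ = _ := by ring
  have key := bucket_sum A.JP R A.bP A.aP (fun β => (2 : ℝ) ^ β.1 * 2 ^ β.2) 4 A.k 0 (by norm_num)
    A.k_pos.le (Finset.filter_subset _ _) (fun β => by positivity) (fun j hj => (hv j hj).1)
    (fun j hj => (hv j hj).2) (by
      intro β
      have h1 := le_mul_card_one A.k A.k_ge #{j ∈ A.JP | A.bP j = β}
      rw [← card_rank A.r _ (fun x => x % A.k = 1 % A.k)] at h1
      have hrank (j : ℕ) :
          #{j' ∈ {i ∈ A.JP | A.bP i = A.bP j} | arrLE A.r j' j} = rk j := by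
        rw [Finset.filter_filter]
        rfl
      have h2 : {j ∈ {j ∈ A.JP | A.bP j = β} |
          #{j' ∈ {j ∈ A.JP | A.bP j = β} | arrLE A.r j' j} % A.k = 1 % A.k} =
          {j ∈ R | A.bP j = β} := by
        ext j
        constructor
        · intro h
          obtain ⟨h4, h3⟩ := Finset.mem_filter.1 h
          obtain ⟨h5, h6⟩ := Finset.mem_filter.1 h4
          subst h6
          rw [hrank] at h3
          exact Finset.mem_filter.2 ⟨Finset.mem_filter.2 ⟨h5, h3⟩, rfl⟩
        · intro h
          obtain ⟨h4, h6⟩ := Finset.mem_filter.1 h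
          obtain ⟨h5, h3⟩ := Finset.mem_filter.1 h4
          subst h6
          exact Finset.mem_filter.2 ⟨Finset.mem_filter.2 ⟨h5, rfl⟩, by rwa [hrank]⟩
      rw [h2] at h1
      rw [add_zero]
      exact_mod_cast h1)
  have hB := A.sum_le_sum_B_Jimm hRimm (f := A.aP) fun j hj =>
    ⟨A.aP_nonneg hj, by rw [A.B_eq hj]; linarith [A.aM_nonneg hj]⟩
  have := A.k_pos
  calc _ ≤ _ := key
    _ = 4 * A.k * ∑ j ∈ R, A.aP j := by ring
    _ ≤ _ := by gcongr

/-- In table `T⁻` the rejected jobs pay for all but fewer than `1/ε` jobs of each bucket. -/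
lemma sum_JM_le : ∑ j ∈ A.JM, A.aM j ≤ 2 * A.k * ∑ j ∈ A.Jimm, A.B j +
    2 * A.k * ∑ β ∈ A.JM.image A.bM, (2 : ℝ) ^ β.1 := by
  set rk : ℕ → ℕ := fun j => rankMinus A.J A.r A.p A.w A.sched A.Jimm A.ε j with hrk
  set R : Finset ℕ := {j ∈ A.JM | rk j % A.k = 0} with hR
  have hRimm : R ⊆ A.Jimm := by
    intro j hj
    obtain ⟨h1, h2⟩ := Finset.mem_filter.1 hj
    exact (A.hJimm j).2 ⟨(A.mem_JM.1 h1).1, Or.inr ⟨h1, h2⟩⟩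
  have hv : ∀ j ∈ A.JM, (2 : ℝ) ^ (A.bM j).1 ≤ A.aM j ∧
      A.aM j ≤ 2 * (2 : ℝ) ^ (A.bM j).1 := by
    intro j hj
    obtain ⟨hJ, h1⟩ := A.mem_JM.1 hj
    have ha : 0 < A.aM j := (mul_pos A.k_pos (A.wp_pos hJ)).trans h1
    constructor
    · exact two_zpow_log_le ha
    · have := Int.lt_zpow_succ_log_self (b := 2) (by norm_num) (A.aM j)
      rw [Nat.cast_ofNat, zpow_add_one₀ (by norm_num)] at this
      rw [mul_comm]
      exact this.le
  have key := bucket_sum A.JM R A.bM A.aM (fun β => (2 : ℝ) ^ β.1) 2 A.k A.k (by norm_num)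
    A.k_pos.le (Finset.filter_subset _ _) (fun β => by positivity) (fun j hj => (hv j hj).1)
    (fun j hj => (hv j hj).2) (by
      intro β
      have h1 := le_mul_card_zero A.k A.k_ge #{j ∈ A.JM | A.bM j = β}
      rw [← card_rank A.r _ (fun x => x % A.k = 0)] at h1
      have hrank (j : ℕ) :
          #{j' ∈ {i ∈ A.JM | A.bM i = A.bM j} | arrLE A.r j' j} = rk j := by
        rw [Finset.filter_filter]
        rfl
      have h2 : {j ∈ {j ∈ A.JM | A.bM j = β} |
          #{j' ∈ {j ∈ A.JM | A.bM j = β} | arrLE A.r j' j} % A.k = 0} =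
          {j ∈ R | A.bM j = β} := by
        ext j
        constructor
        · intro h
          obtain ⟨h4, h3⟩ := Finset.mem_filter.1 h
          obtain ⟨h5, h6⟩ := Finset.mem_filter.1 h4
          subst h6
          rw [hrank] at h3
          exact Finset.mem_filter.2 ⟨Finset.mem_filter.2 ⟨h5, h3⟩, rfl⟩
        · intro h
          obtain ⟨h4, h6⟩ := Finset.mem_filter.1 h
          obtain ⟨h5, h3⟩ := Finset.mem_filter.1 h4
          subst h6
          exact Finset.mem_filter.2 ⟨Finset.mem_filter.2 ⟨h5, rfl⟩, by rwa [hrank]⟩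
      rw [h2] at h1
      exact_mod_cast h1)
  have hB := A.sum_le_sum_B_Jimm hRimm (f := A.aM) fun j hj =>
    ⟨A.aM_nonneg hj, by rw [A.B_eq hj]; linarith [A.aP_nonneg hj]⟩
  have := A.k_pos
  have := mul_le_mul_of_nonneg_left hB (show (0 : ℝ) ≤ 2 * A.k by positivity)
  linarith

/-! ### Jobs of table `T⁻` not paid for by rejections -/

/-- Arrival costs within (and processing costs of) density class `d`. -/
def Q (d : ℤ) : ℝ := ∑ j ∈ A.J' with A.c j = d, (A.aP j + A.w j * A.p j)

/-- An upper bound for the weight of class `d` that is ever pending at once. -/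
def M (d : ℤ) : ℝ := Real.sqrt (8 * 2 ^ d * A.Q d)

lemma Q_nonneg (d : ℤ) : 0 ≤ A.Q d := Finset.sum_nonneg fun j hj => by
  have hJ := A.J'_sub (Finset.mem_filter.1 hj).1
  exact add_nonneg (A.aP_nonneg hJ) (A.wp_pos hJ).le

/-- Weight of one density class pending at the same time has forced arrival costs quadratic in its
amount: each job found the remaining volume of its predecessors on arrival. -/
lemma class_weight_le (d : ℤ) (t : ℕ) :
    ∑ i ∈ A.J' with A.c i = d, A.d i * A.x i t ≤ A.M d := by
  set N : Finset ℕ := {i ∈ A.J' | A.c i = d} with hN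
  have hNJ : ∀ i ∈ N, i ∈ A.J := fun i hi => A.J'_sub (Finset.mem_filter.1 hi).1
  have hlow : ∀ i ∈ N, (2 : ℝ) ^ d ≤ A.d i := fun i hi => by
    have := A.two_c_le (hNJ i hi)
    rwa [(Finset.mem_filter.1 hi).2] at this
  have hpos : (0 : ℝ) < 2 ^ d := by positivity
  have h1 : ∑ i ∈ N, A.d i * A.x i t ≤ 2 * 2 ^ d * ∑ i ∈ N, A.x i t := by
    rw [Finset.mul_sum]
    refine Finset.sum_le_sum fun i hi => mul_le_mul_of_nonneg_right ?_ (A.x_nonneg i t)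
    have := A.lt_two_c (j := i)
    rw [(Finset.mem_filter.1 hi).2] at this
    exact this.le
  have h2 : (2 : ℝ) ^ d * (∑ i ∈ N, A.x i t) ^ 2 ≤ 2 * A.Q d := by
    rw [sq, Finset.sum_mul_sum, sum_offdiag A.r, mul_add, Finset.mul_sum, Finset.mul_sum,
      ← Finset.sum_add_distrib]
    unfold Q
    rw [Finset.mul_sum]
    refine Finset.sum_le_sum fun j hj => ?_
    have hJ := hNJ j hj
    have hxp : A.x j t ≤ A.p j := pend_le _ _ _ _ _
    have hx0 := A.x_nonneg j t
    have b1 : (2 : ℝ) ^ d * (A.x j t * A.x j t) ≤ A.w j * A.p j := by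
      rw [← A.d_mul_p hJ, mul_assoc]
      have := hlow j hj
      gcongr
      exact (A.d_pos hJ).le
    have b2 : (2 : ℝ) ^ d * ∑ i ∈ N with arrLT A.r i j, (A.x j t * A.x i t + A.x i t * A.x j t) ≤
        2 * A.aP j := by
      by_cases ht : A.r j ≤ t
      · rw [A.aP_eq hJ]
        have : ∑ i ∈ N with arrLT A.r i j, (2 : ℝ) ^ d * (A.x i t * A.x j t) ≤
            ∑ i ∈ A.pre j with A.c j ≤ A.c i, A.p j * (A.m i j * A.x i (A.r j)) := by
          refine le_trans (Finset.sum_le_sum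
            (g := fun i => A.p j * (A.m i j * A.x i (A.r j))) ?_)
            (Finset.sum_le_sum_of_subset_of_nonneg ?_ ?_)
          · intro i hi
            obtain ⟨hi, hij⟩ := Finset.mem_filter.1 hi
            have hm : (2 : ℝ) ^ d ≤ A.m i j := le_min (hlow i hi) (hlow j hj)
            have hxi : A.x i t ≤ A.x i (A.r j) :=
              pend_anti (by unfold arrLT at hij; omega) ht
            have hxi0 := A.x_nonneg i t
            calc (2 : ℝ) ^ d * (A.x i t * A.x j t) ≤ A.m i j * (A.x i (A.r j) * A.p j) := by
                  gcongr
                  · exact hpos.le.trans hm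
                  · exact hxi0.trans hxi
              _ = _ := by ring
          · intro i hi
            obtain ⟨hi, hij⟩ := Finset.mem_filter.1 hi
            obtain ⟨hi, hc⟩ := Finset.mem_filter.1 hi
            refine Finset.mem_filter.2 ⟨Finset.mem_filter.2 ⟨hi, hij⟩, ?_⟩
            rw [hc, (Finset.mem_filter.1 hj).2]
          · intro i hi _
            exact mul_nonneg (Nat.cast_nonneg _)
              (A.term_nonneg hJ (Finset.mem_filter.1 hi).1 _)
        rw [Finset.mul_sum, Finset.mul_sum]
        refine le_trans (le_of_eq ?_) (mul_le_mul_of_nonneg_left this zero_le_two)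
        rw [Finset.mul_sum]
        exact Finset.sum_congr rfl fun i _ => by ring
      · have h0 : A.x j t = 0 := pend_eq_zero (not_le.1 ht)
        rw [h0]
        simpa using A.aP_nonneg hJ
    have := A.wp_pos hJ
    linarith
  -- The total weight is at most `2 · 2^d` times the volume, and `h2` bounds the volume squared.
  refine h1.trans (Real.le_sqrt_of_sq_le ?_)
  calc (2 * 2 ^ d * ∑ i ∈ N, A.x i t) ^ 2 = 4 * 2 ^ d * (2 ^ d * (∑ i ∈ N, A.x i t) ^ 2) := by ring
    _ ≤ 4 * 2 ^ d * (2 * A.Q d) := by gcongr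
    _ = _ := by ring

/-- The density classes that occur. -/
def C : Finset ℤ := A.J.image A.c

/-- An upper bound for the weight of classes below `c` that is ever pending at once. -/
def P (c : ℤ) : ℝ := ∑ d ∈ A.C with d < c, A.M d

lemma P_nonneg (c : ℤ) : 0 ≤ A.P c := Finset.sum_nonneg fun _ _ => Real.sqrt_nonneg _

/-- Every job counted in `α_j⁻` is of a class below that of `j`. -/
lemma aM_le {j : ℕ} (hj : j ∈ A.J) : A.aM j ≤ A.p j * A.P (A.c j) := by
  rw [A.aM_eq hj]
  refine mul_le_mul_of_nonneg_left ?_ (Nat.cast_nonneg _)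
  have h1 : ∑ i ∈ A.pre j with ¬ A.c j ≤ A.c i, A.m i j * A.x i (A.r j) ≤
      ∑ i ∈ A.J' with A.c i < A.c j, A.d i * A.x i (A.r j) := by
    refine le_trans (Finset.sum_le_sum (g := fun i => A.d i * A.x i (A.r j)) fun i _ =>
      mul_le_mul_of_nonneg_right (min_le_left _ _) (A.x_nonneg i _))
      (Finset.sum_le_sum_of_subset_of_nonneg ?_ ?_)
    · intro i hi
      obtain ⟨h1, h2⟩ := Finset.mem_filter.1 hi
      exact Finset.mem_filter.2 ⟨A.pre_sub h1, not_le.1 h2⟩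
    · intro i hi _
      exact mul_nonneg (A.d_pos (A.J'_sub (Finset.mem_filter.1 hi).1)).le (A.x_nonneg i _)
  refine h1.trans ?_
  rw [← Finset.sum_fiberwise_of_maps_to (g := A.c) (t := {d ∈ A.C | d < A.c j})]
  · refine Finset.sum_le_sum fun d hd => ?_
    have hd' := (Finset.mem_filter.1 hd).2
    refine le_trans (le_of_eq ?_) (A.class_weight_le d (A.r j))
    rw [Finset.filter_filter]
    refine Finset.sum_congr (Finset.filter_congr fun i _ => ?_) fun _ _ => rfl
    constructor
    · exact fun h => h.2
    · rintro rfl; exact ⟨hd', rfl⟩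
  · intro i hi
    obtain ⟨h1, h2⟩ := Finset.mem_filter.1 hi
    exact Finset.mem_filter.2 ⟨Finset.mem_image_of_mem _ (A.J'_sub h1), h2⟩

/-- One job per bucket of `T⁻`: the sum is geometric in the first and the last coordinate, and
the classes are handled by the Hardy inequality. -/
lemma sum_buckets_le : A.k * ∑ β ∈ A.JM.image A.bM, (2 : ℝ) ^ β.1 ≤
    384 * ∑ j ∈ A.J', (A.aP j + A.w j * A.p j) := by
  have hk := A.k_pos
  set S1 := (A.JM.image A.bM).image (fun β => β.1)
  set S3 := (A.JM.image A.bM).image (fun β => β.2.2)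
  -- The conditions on `(a, c, b)` come from `α_j⁻ ≤ p_j P_c`: together with `w_j p_j / ε < α_j⁻`
  -- it gives the first one, and with `2^a ≤ α_j⁻` and `p_j < 2 · 2^b` the second.
  set X : Finset (ℤ × ℤ × ℤ) := {β ∈ S1 ×ˢ A.C ×ˢ S3 |
    A.k * 2 ^ β.2.1 * (2 : ℝ) ^ β.2.2 ≤ A.P β.2.1 ∧ (2 : ℝ) ^ β.1 ≤ 2 * 2 ^ β.2.2 * A.P β.2.1}
    with hX
  have hsub : A.JM.image A.bM ⊆ X := by
    intro β hβ
    obtain ⟨j, hj, rfl⟩ := Finset.mem_image.1 hβ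
    obtain ⟨hJ, hlt⟩ := A.mem_JM.1 hj
    have hp : (0 : ℝ) < A.p j := by exact_mod_cast A.hp j hJ
    have ha : 0 < A.aM j := (mul_pos hk (A.wp_pos hJ)).trans hlt
    have hle := A.aM_le hJ
    have l1 : (2 : ℝ) ^ (A.bM j).1 ≤ A.aM j := two_zpow_log_le ha
    have l3 : (2 : ℝ) ^ (A.bM j).2.2 ≤ A.p j := two_zpow_log_le hp
    have u3 : (A.p j : ℝ) < (2 : ℝ) ^ (A.bM j).2.2 * 2 := by
      have := Int.lt_zpow_succ_log_self (b := 2) (by norm_num) (A.p j : ℝ)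
      rwa [Nat.cast_ofNat, zpow_add_one₀ (by norm_num)] at this
    have e2 : (A.bM j).2.1 = A.c j := rfl
    refine Finset.mem_filter.2 ⟨Finset.mem_product.2 ⟨Finset.mem_image_of_mem _ hβ,
      Finset.mem_product.2 ⟨?_, Finset.mem_image_of_mem (fun β : ℤ × ℤ × ℤ => β.2.2) hβ⟩⟩, ?_, ?_⟩
    · rw [e2]; exact Finset.mem_image_of_mem _ hJ
    · rw [e2]
      have h1 : A.p j * (A.k * A.w j) < A.p j * A.P (A.c j) := by nlinarith
      have h2 := lt_of_mul_lt_mul_left h1 hp.le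
      rw [← A.d_mul_p hJ] at h2
      refine le_trans ?_ h2.le
      rw [mul_assoc]
      have := A.two_c_le hJ
      have := A.d_pos hJ
      gcongr
    · rw [e2]
      refine (l1.trans hle).trans (mul_le_mul_of_nonneg_right ?_ (A.P_nonneg _))
      linarith
  -- Sum over `a` first, then over `b`, using that the largest term dominates each time.
  have h1 : ∑ β ∈ A.JM.image A.bM, (2 : ℝ) ^ β.1 ≤ ∑ c ∈ A.C, 8 / A.k * (A.P c ^ 2 / 2 ^ c) := by
    refine (Finset.sum_le_sum_of_subset_of_nonneg hsub fun _ _ _ => by positivity).trans ?_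
    rw [hX, Finset.sum_filter, Finset.sum_product_right, Finset.sum_product]
    refine Finset.sum_le_sum fun c _ => ?_
    have hP := A.P_nonneg c
    have hb : ∀ b ∈ S3, (∑ a ∈ S1, if A.k * 2 ^ c * (2 : ℝ) ^ b ≤ A.P c ∧
        (2 : ℝ) ^ a ≤ 2 * 2 ^ b * A.P c then (2 : ℝ) ^ a else 0) ≤
        if A.k * 2 ^ c * (2 : ℝ) ^ b ≤ A.P c then 4 * A.P c * 2 ^ b else 0 := by
      intro b _
      split_ifs with h
      · simp only [h, true_and]
        rw [← Finset.sum_filter]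
        refine (geom_sum_le' _ (2 * 2 ^ b * A.P c) (by positivity) fun a ha =>
          (Finset.mem_filter.1 ha).2).trans_eq (by ring)
      · simp [h]
    refine (Finset.sum_le_sum hb).trans ?_
    rw [← Finset.sum_filter, ← Finset.mul_sum]
    have h2 := geom_sum_le' {b ∈ S3 | A.k * 2 ^ c * (2 : ℝ) ^ b ≤ A.P c} (A.P c / (A.k * 2 ^ c))
      (by positivity) fun b hb => by
        rw [le_div_iff₀ (by positivity), mul_comm]
        exact (Finset.mem_filter.1 hb).2
    calc _ ≤ 4 * A.P c * (2 * (A.P c / (A.k * 2 ^ c))) := by gcongr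
      _ = _ := by field_simp; ring
  have h2 : ∑ d ∈ A.C, A.M d ^ 2 / 2 ^ d = 8 * ∑ j ∈ A.J', (A.aP j + A.w j * A.p j) := by
    rw [← Finset.sum_fiberwise_of_maps_to (s := A.J') (g := A.c) (t := A.C)
      (fun i hi => Finset.mem_image_of_mem _ (A.J'_sub hi)), Finset.mul_sum]
    refine Finset.sum_congr rfl fun d _ => ?_
    have hQ := A.Q_nonneg d
    unfold M
    rw [Real.sq_sqrt (by positivity)]
    unfold Q
    field_simp
  have h3 := hardy A.M A.C
  rw [h2] at h3
  rw [← Finset.mul_sum] at h1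
  calc _ ≤ (A.k : ℝ) * (8 / (A.k : ℝ) * ∑ c ∈ A.C, A.P c ^ 2 / 2 ^ c) := by gcongr
    _ = 8 * ∑ c ∈ A.C, A.P c ^ 2 / (2 : ℝ) ^ c := by field_simp
    _ ≤ 8 * (6 * (8 * ∑ j ∈ A.J', (A.aP j + A.w j * A.p j))) := by
        refine mul_le_mul_of_nonneg_left h3 (by norm_num)
    _ = _ := by ring

lemma sum_aP_le : ∑ j ∈ A.J, A.aP j ≤
    A.k * ∑ j ∈ A.J, A.w j * A.p j + 4 * A.k * ∑ j ∈ A.Jimm, A.B j := by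
  refine le_trans ?_ (add_le_add_right A.sum_JP_le _)
  rw [← Finset.sum_filter_not_add_sum_filter A.J (fun j => A.k * (A.w j * A.p j) ≤ A.aP j)]
  have e : {j ∈ A.J | A.k * (A.w j * A.p j) ≤ A.aP j} = A.JP := by
    ext j; rw [A.mem_JP, Finset.mem_filter]
  rw [e, Finset.mul_sum]
  refine add_le_add_left ?_ _
  refine (Finset.sum_le_sum fun j hj => (not_le.1 (Finset.mem_filter.1 hj).2).le).trans
    (Finset.sum_le_sum_of_subset_of_nonneg (Finset.filter_subset _ _) fun j hj _ =>
      mul_nonneg A.k_pos.le (A.wp_pos hj).le)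

lemma sum_aM_le : ∑ j ∈ A.J, A.aM j ≤
    A.k * ∑ j ∈ A.J, A.w j * A.p j + (2 * A.k * ∑ j ∈ A.Jimm, A.B j +
      768 * ∑ j ∈ A.J', (A.aP j + A.w j * A.p j)) := by
  have h0 := A.sum_JM_le
  have h1 := A.sum_buckets_le
  have h2 : ∑ j ∈ A.JM, A.aM j ≤ 2 * A.k * ∑ j ∈ A.Jimm, A.B j +
      768 * ∑ j ∈ A.J', (A.aP j + A.w j * A.p j) := by linarith
  refine le_trans ?_ (add_le_add_right h2 _)
  rw [← Finset.sum_filter_not_add_sum_filter A.J (fun j => A.k * (A.w j * A.p j) < A.aM j)]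
  have e : {j ∈ A.J | A.k * (A.w j * A.p j) < A.aM j} = A.JM := by
    ext j; rw [A.mem_JM, Finset.mem_filter]
  rw [e, Finset.mul_sum]
  refine add_le_add_left ?_ _
  refine (Finset.sum_le_sum fun j hj => not_lt.1 (Finset.mem_filter.1 hj).2).trans
    (Finset.sum_le_sum_of_subset_of_nonneg (Finset.filter_subset _ _) fun j hj _ =>
      mul_nonneg A.k_pos.le (A.wp_pos hj).le)

/-- The competitive bound in terms of flow times cut off at a common horizon. -/
lemma sum_W_le_opt {o : ℕ → Option ℕ} (ho : Good A.r A.p o) {T : ℕ}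
    (hr : ∀ j ∈ A.J, A.r j ≤ T) (hdone : ∀ j ∈ A.J, rem A.p o j T = 0) :
    ∑ t ∈ range T, A.W t ≤
      13500 * A.k ^ 2 * ∑ j ∈ A.J, ∑ t ∈ range T, A.d j * pend A.r A.p o j t := by
  have hS := A.sum_wp_le ho hr hdone
  have hU := A.sum_W_le hr
  have hD := A.sum_B_le ho hr hdone
  have hP := A.sum_aP_le
  have hM := A.sum_aM_le
  have hk2 : (2 : ℝ) ≤ A.k := by exact_mod_cast A.k_ge
  set k : ℝ := (A.k : ℝ)
  set F := ∑ j ∈ A.J, ∑ t ∈ range T, A.d j * pend A.r A.p o j t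
  set FA := ∑ t ∈ range T, A.W t
  set S := ∑ j ∈ A.J, A.w j * A.p j
  have hS0 : 0 ≤ S := Finset.sum_nonneg fun j hj => (A.wp_pos hj).le
  have hF0 : 0 ≤ F := by linarith
  have hsplit : ∑ j ∈ A.J', A.B j + ∑ j ∈ A.Jimm, A.B j = ∑ j ∈ A.J, A.B j :=
    Finset.sum_sdiff A.Jimm_sub
  have hBeq : ∑ j ∈ A.J, A.B j = ∑ j ∈ A.J, A.aP j + ∑ j ∈ A.J, A.aM j := by
    rw [← Finset.sum_add_distrib]
    exact Finset.sum_congr rfl fun j hj => A.B_eq hj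
  have hB0 : 0 ≤ ∑ j ∈ A.Jimm, A.B j := Finset.sum_nonneg fun j hj => by
    have hJ := A.Jimm_sub hj
    rw [A.B_eq hJ]
    exact add_nonneg (A.aP_nonneg hJ) (A.aM_nonneg hJ)
  have hS' : ∑ j ∈ A.J', A.w j * A.p j ≤ S :=
    Finset.sum_le_sum_of_subset_of_nonneg A.J'_sub fun j hj _ => (A.wp_pos hj).le
  have hP' : ∑ j ∈ A.J', A.aP j ≤ ∑ j ∈ A.J, A.aP j :=
    Finset.sum_le_sum_of_subset_of_nonneg A.J'_sub fun j hj _ => A.aP_nonneg hj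
  rw [Finset.sum_add_distrib] at hM
  have hU' : (1 + k) * ∑ j ∈ A.J', A.w j * A.p j ≤ (1 + k) * (2 * F) := by
    gcongr; linarith
  have hkF : 2 * F ≤ k * F := by gcongr
  have hkF2 : 2 * (k * F) ≤ k ^ 2 * F := by nlinarith
  -- Subtracting `hU` from `hD` cancels the cost of the algorithm and the kept jobs' `B_j`.
  have hI : ∑ j ∈ A.Jimm, A.B j ≤ 4 * (k * F) := by linarith
  have hkI : k * ∑ j ∈ A.Jimm, A.B j ≤ 4 * (k ^ 2 * F) := by
    calc _ ≤ k * (4 * (k * F)) := by gcongr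
      _ = _ := by ring
  have hkS : k * S ≤ 2 * (k * F) := by
    calc _ ≤ k * (2 * F) := by gcongr
      _ = _ := by ring
  linarith

end AlgA

/-- There is an absolute constant `c` such that the total
fractional weighted flow-time of algorithm `A` (over jobs not in `J^imm`) is at
most `(c/ε²)·F^O`, where `F^O` is the optimal total fractional weighted flow-time
of the instance (stated for every valid offline schedule, hence for the optimum). -/
theorem flow_of_A_competitive :
    ∃ c : ℝ, 0 < c ∧ ∀ A : AlgA, ∀ osched : ℕ → Option ℕ, OffValid A.J A.r A.p osched →
      ∑ j ∈ A.J \ A.Jimm, fracFlow A.r A.p A.w A.sched j ≤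
        (c / A.ε ^ 2) * ∑ j ∈ A.J, fracFlow A.r A.p A.w osched j := by
  refine ⟨13500, by norm_num, fun A osched hO => ?_⟩
  have ho : Good A.r A.p osched := fun t j h => (hO.1 t j h).2
  obtain ⟨T₁, hT₁⟩ := A.exists_horizon
  choose! f hf using hO.2
  set T := T₁ + A.J.sup f
  have hA : ∀ j ∈ A.J', rem A.p A.sched j T = 0 := (hT₁ T (Nat.le_add_right _ _)).2
  have hdone : ∀ j ∈ A.J, rem A.p osched j T = 0 := by
    intro j hj
    have h1 := Finset.le_sup (f := f) hj
    have := rem_anti A.p osched j (show f j ≤ T by omega)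
    rw [hf j hj] at this
    omega
  have key := A.sum_W_le_opt ho (hT₁ T (Nat.le_add_right _ _)).1 hdone
  have e1 : ∑ j ∈ A.J', fracFlow A.r A.p A.w A.sched j = ∑ t ∈ range T, A.W t := by
    rw [Finset.sum_congr rfl fun j hj => fracFlow_eq (r := A.r) A.w (hA j hj), Finset.sum_comm]
    rfl
  have e2 : ∑ j ∈ A.J, fracFlow A.r A.p A.w osched j =
      ∑ j ∈ A.J, ∑ t ∈ range T, A.d j * pend A.r A.p osched j t :=
    Finset.sum_congr rfl fun j hj => fracFlow_eq A.w (hdone j hj)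
  have e3 : 13500 / A.ε ^ 2 = 13500 * (A.k : ℝ) ^ 2 := by
    rw [A.hk]; ring
  change ∑ j ∈ A.J', fracFlow A.r A.p A.w A.sched j ≤ _
  rw [e1, e2, e3]
  exact key

end NPSched
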